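/- Inhomogeneous (retarded) Lorentz–Strichartz estimate: fix d ≥ 1 and let (p,q) be a Schrödinger-admissible pair with 2 < p < ∞, i.e. 2 ≤ q ≤ ∞, 2/p + d/q = d/2. Then for every spacetime function F with ‖F‖_{L^{p',2}_t L^{q'}_x(ℝ×ℝ^d)} < ∞ (p', q' conjugate exponents), one has ‖ ∫_0^t e^{i(t−s)Δ} F(s) ds ‖_{L^{p,2}_t L^q_x(ℝ×ℝ^d)} ≤ C ‖F‖_{L^{p',2}_t L^{q'}_x(ℝ×ℝ^d)}, with C depending only on d, p, q. -/

import Mathlib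

open MeasureTheory Set
open scoped ENNReal Real

noncomputable section

/-- The free Schrödinger propagator `e^{itΔ}` acting on functions on a `d`-dimensional space:
for `t ≠ 0`, `(e^{itΔ}f)(x) = (4πit)^{-d/2} ∫ e^{i|x-y|²/(4t)} f(y) dy`, and `e^{i0Δ}f = f`. -/
def schrod {E : Type*} [NormedAddCommGroup E] [MeasureSpace E] (d : ℕ) (t : ℝ) (f : E → ℂ) :
    E → ℂ :=
  if t = 0 then f
  else fun x =>
    (4 * (Real.pi : ℂ) * Complex.I * (t : ℂ)) ^ (-(d : ℂ) / 2) *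
      ∫ y, Complex.exp (Complex.I * ((‖x - y‖ ^ 2 : ℝ) : ℂ) / (4 * (t : ℂ))) * f y

/-- Mixed Lebesgue norm `‖u‖_{L^p_t L^q_x (I × space)}`. -/
def mixedNorm {α : Type*} [MeasurableSpace α] (ν : Measure α) (I : Set ℝ) (p q : ℝ≥0∞)
    (u : ℝ → α → ℂ) : ℝ≥0∞ :=
  if p = ∞ then essSup (fun t => eLpNorm (u t) q ν) (volume.restrict I)
  else (∫⁻ t in I, eLpNorm (u t) q ν ^ p.toReal) ^ (1 / p.toReal)

/-- Lorentz quasinorm `p^{1/q} ‖ λ · ν({g > λ})^{1/p} ‖_{L^q((0,∞), dλ/λ)}`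
for an `ℝ≥0∞`-valued function `g`. -/
def lorentzNorm {α : Type*} [MeasurableSpace α] (ν : Measure α) (p q : ℝ≥0∞)
    (g : α → ℝ≥0∞) : ℝ≥0∞ :=
  if q = ∞ then
    ⨆ l ∈ Set.Ioi (0 : ℝ), ENNReal.ofReal l * ν {x | ENNReal.ofReal l < g x} ^ p⁻¹.toReal
  else
    (p * ∫⁻ l in Set.Ioi (0 : ℝ),
        (ENNReal.ofReal l * ν {x | ENNReal.ofReal l < g x} ^ p⁻¹.toReal) ^ q.toReal /
          ENNReal.ofReal l) ^ q⁻¹.toReal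

/-- Lorentz quasinorm `‖f‖_{L^{p,q}}` of a scalar function. -/
def lorentzNormC {α : Type*} [MeasurableSpace α] (ν : Measure α) (p q : ℝ≥0∞)
    (f : α → ℂ) : ℝ≥0∞ :=
  lorentzNorm ν p q fun x => (‖f x‖₊ : ℝ≥0∞)

/-- Lorentz-in-time mixed norm `‖u‖_{L^{p,q}_t L^r_x (I × space)}`. -/
def lorentzMixedNorm {α : Type*} [MeasurableSpace α] (ν : Measure α) (I : Set ℝ)
    (p q r : ℝ≥0∞) (u : ℝ → α → ℂ) : ℝ≥0∞ :=
  lorentzNorm (volume.restrict I) p q fun t => eLpNorm (u t) r ν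

/-- The nonlinearity `|f|^a f`. -/
def nonlin {E : Type*} (a : ℝ) (f : E → ℂ) : E → ℂ := fun x => ((‖f x‖ ^ a : ℝ) : ℂ) * f x

/-!
Interpolating the bound `L¹ → L^∞` of norm `(4π|t|)^{-d/2}` with the conservation of the `L²` norm
gives `‖e^{itΔ}f‖_q ≤ c |t|^{-2/p} ‖f‖_{q'}` for an admissible pair, so by Minkowski's inequality
the `L^q` norm of the Duhamel integral at time `t` is at most `∫ c |t - s|^{-2/p} ‖F s‖_{q'} ds`.
This is a Hardy–Littlewood–Sobolev kernel. O'Neil's inequality bounds the rearrangement of the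
result by an integral of the rearrangement of `s ↦ ‖F s‖_{q'}`, and in logarithmic variables the
Lorentz norms become `L^r` norms and this integral a convolution with an integrable kernel
`e^{-c|z|}`, to which Young's inequality applies.
-/

/-- The interval `(0, v) ⊆ ℝ` with a possibly infinite right endpoint; it is the range of
integration in layer-cake formulas. -/
def posBelow (v : ℝ≥0∞) : Set ℝ := {σ | 0 < σ ∧ ENNReal.ofReal σ < v}

/-- The distribution function `σ ↦ μ {g > σ}`, with a real level `σ`. -/
def distribution {X : Type*} [MeasurableSpace X] (μ : Measure X) (g : X → ℝ≥0∞) (σ : ℝ) :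
    ℝ≥0∞ :=
  μ {x | ENNReal.ofReal σ < g x}

/-- The decreasing rearrangement `g*(s)`, i.e. the length of the interval of levels `σ > 0` with
`μ {g > σ} > s`. -/
def rearrangement {X : Type*} [MeasurableSpace X] (μ : Measure X) (g : X → ℝ≥0∞) (s : ℝ) :
    ℝ≥0∞ :=
  volume {σ : ℝ | 0 < σ ∧ ENNReal.ofReal s < distribution μ g σ}

section LayerCake

lemma posBelow_top : posBelow ∞ = Ioi 0 := by
  ext σ
  simp [posBelow]

lemma posBelow_of_ne_top {v : ℝ≥0∞} (hv : v ≠ ∞) : posBelow v = Ioo 0 v.toReal := by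
  ext σ
  simp only [posBelow, mem_ofPred_eq, mem_Ioo]
  exact and_congr_right fun h => ENNReal.ofReal_lt_iff_lt_toReal h.le hv

lemma lintegral_Ioo_mul_rpow_sub_one {r : ℝ} (hr : 0 < r) {b : ℝ} (hb : 0 ≤ b) :
    ∫⁻ σ in Ioo 0 b, ENNReal.ofReal (r * σ ^ (r - 1)) = ENNReal.ofReal (b ^ r) := by
  have hint : IntegrableOn (fun σ : ℝ => r * σ ^ (r - 1)) (Ioc 0 b) :=
    ((intervalIntegrable_iff_integrableOn_Ioc_of_le hb).1
      (intervalIntegral.intervalIntegrable_rpow' (by linarith))).const_mul r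
  rw [restrict_Ioo_eq_restrict_Ioc, ← ofReal_integral_eq_lintegral_ofReal hint,
    integral_const_mul, ← intervalIntegral.integral_of_le hb,
    integral_rpow (Or.inl (by linarith)), sub_add_cancel, Real.zero_rpow hr.ne', sub_zero,
    mul_div_cancel₀ _ hr.ne']
  filter_upwards [ae_restrict_mem measurableSet_Ioc] with σ hσ
  exact mul_nonneg hr.le (Real.rpow_nonneg hσ.1.le _)

lemma lintegral_posBelow_mul_rpow_sub_one {r : ℝ} (hr : 0 < r) (v : ℝ≥0∞) :
    ∫⁻ σ in posBelow v, ENNReal.ofReal (r * σ ^ (r - 1)) = v ^ r := by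
  rcases eq_or_ne v ∞ with rfl | hv
  · rw [ENNReal.top_rpow_of_pos hr, posBelow_top]
    refine ENNReal.eq_top_of_forall_nnreal_le fun c => ?_
    calc (c : ℝ≥0∞) = ENNReal.ofReal (((c : ℝ) ^ r⁻¹) ^ r) := by
          rw [Real.rpow_inv_rpow c.coe_nonneg hr.ne', ENNReal.ofReal_coe_nnreal]
      _ = ∫⁻ σ in Ioo 0 ((c : ℝ) ^ r⁻¹), ENNReal.ofReal (r * σ ^ (r - 1)) :=
          (lintegral_Ioo_mul_rpow_sub_one hr (by positivity)).symm
      _ ≤ _ := lintegral_mono_set Ioo_subset_Ioi_self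
  · rw [posBelow_of_ne_top hv, lintegral_Ioo_mul_rpow_sub_one hr ENNReal.toReal_nonneg,
      ← ENNReal.ofReal_rpow_of_nonneg ENNReal.toReal_nonneg hr.le, ENNReal.ofReal_toReal hv]

lemma volume_posBelow (v : ℝ≥0∞) : volume (posBelow v) = v := by
  simpa using lintegral_posBelow_mul_rpow_sub_one one_pos v

lemma lintegral_mul_lintegral_posBelow {X : Type*} [MeasurableSpace X] {μ : Measure X} [SFinite μ]
    {k g : X → ℝ≥0∞} {f : ℝ → ℝ≥0∞} (hk : AEMeasurable k μ) (hg : Measurable g)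
    (hf : Measurable f) :
    ∫⁻ x, k x * (∫⁻ σ in posBelow (g x), f σ) ∂μ =
      ∫⁻ σ in Ioi 0, f σ * ∫⁻ x in {x | ENNReal.ofReal σ < g x}, k x ∂μ := by
  have hS : MeasurableSet {z : X × ℝ | ENNReal.ofReal z.2 < g z.1} :=
    measurableSet_lt (ENNReal.measurable_ofReal.comp measurable_snd) (hg.comp measurable_fst)
  set Φ : X × ℝ → ℝ≥0∞ :=
    {z : X × ℝ | ENNReal.ofReal z.2 < g z.1}.indicator (fun z => k z.1 * f z.2)
  have hΦ : AEMeasurable Φ (μ.prod (volume.restrict (Ioi 0))) :=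
    (hk.comp_fst.mul (hf.comp measurable_snd).aemeasurable).indicator hS
  calc ∫⁻ x, k x * (∫⁻ σ in posBelow (g x), f σ) ∂μ
      = ∫⁻ x, (∫⁻ σ in Ioi 0, Φ (x, σ)) ∂μ := by
        refine lintegral_congr fun x => ?_
        have hx : MeasurableSet {σ : ℝ | ENNReal.ofReal σ < g x} :=
          measurableSet_lt ENNReal.measurable_ofReal measurable_const
        rw [← lintegral_const_mul _ hf, show posBelow (g x) = {σ | ENNReal.ofReal σ < g x} ∩ Ioi 0
          from inter_comm _ _, ← Measure.restrict_restrict hx, ← lintegral_indicator hx]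
        rfl
    _ = ∫⁻ σ in Ioi 0, ∫⁻ x, Φ (x, σ) ∂μ := lintegral_lintegral_swap hΦ
    _ = ∫⁻ σ in Ioi 0, f σ * ∫⁻ x in {x | ENNReal.ofReal σ < g x}, k x ∂μ := by
        refine lintegral_congr fun σ => ?_
        have hσ : MeasurableSet {x | ENNReal.ofReal σ < g x} := measurableSet_lt measurable_const hg
        rw [← lintegral_const_mul'' _ hk.restrict, ← lintegral_indicator hσ]
        refine lintegral_congr fun x => ?_
        simp only [Φ, indicator, mem_ofPred_eq, mul_comm]

lemma setOf_lt_ae_eq_posBelow {m : ℝ → ℝ≥0∞} (hm : Antitone m) (c : ℝ≥0∞) :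
    {σ : ℝ | 0 < σ ∧ c < m σ} =ᵐ[volume] posBelow (volume {σ : ℝ | 0 < σ ∧ c < m σ}) := by
  set A := {σ : ℝ | 0 < σ ∧ c < m σ}
  have subset_A : posBelow (volume A) ⊆ A := fun σ hσ => by
    by_contra hA
    have hle : m σ ≤ c := not_lt.1 fun h => hA ⟨hσ.1, h⟩
    have hsub : A ⊆ Ioo 0 σ := fun τ hτ =>
      ⟨hτ.1, lt_of_not_ge fun h => ((hm h).trans hle).not_gt hτ.2⟩
    refine hσ.2.not_ge ((measure_mono hsub).trans ?_)
    simp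
  have A_diff_subset : A \ posBelow (volume A) ⊆ {(volume A).toReal} := fun σ hσ => by
    have hsub : Ioc 0 σ ⊆ A := fun τ hτ => ⟨hτ.1, hσ.1.2.trans_le (hm hτ.2)⟩
    have hge : ENNReal.ofReal σ ≤ volume A := by simpa using measure_mono (μ := volume) hsub
    have heq : ENNReal.ofReal σ = volume A :=
      hge.antisymm (not_lt.1 fun h => hσ.2 ⟨hσ.1.1, h⟩)
    rw [mem_singleton_iff, ← heq, ENNReal.toReal_ofReal hσ.1.1.le]
  exact (ae_le_set.2 (measure_mono_null A_diff_subset (by simp))).antisymm subset_A.eventuallyLE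

end LayerCake

section Rearrangement

variable {X : Type*} [MeasurableSpace X] {μ : Measure X} {g h : X → ℝ≥0∞}

lemma antitone_distribution (μ : Measure X) (g : X → ℝ≥0∞) : Antitone (distribution μ g) :=
  fun _ _ hst => measure_mono fun _ hx => (ENNReal.ofReal_le_ofReal hst).trans_lt hx

lemma antitone_rearrangement (μ : Measure X) (g : X → ℝ≥0∞) : Antitone (rearrangement μ g) :=
  fun _ _ hst => measure_mono fun _ hσ => ⟨hσ.1, (ENNReal.ofReal_le_ofReal hst).trans_lt hσ.2⟩

lemma lorentzNorm_mono (p r : ℝ≥0∞) (hgh : g ≤ h) : lorentzNorm μ p r g ≤ lorentzNorm μ p r h := by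
  unfold lorentzNorm
  split_ifs <;> gcongr <;> exact hgh _

lemma lorentzNorm_congr_distribution (p r : ℝ≥0∞) (hgh : distribution μ g = distribution μ h) :
    lorentzNorm μ p r g = lorentzNorm μ p r h := by
  have hl (l : ℝ) : μ {x | ENNReal.ofReal l < g x} = μ {x | ENNReal.ofReal l < h x} :=
    congrFun hgh l
  simp only [lorentzNorm, hl]

lemma exists_measurable_ge_distribution_eq (μ : Measure X) (g : X → ℝ≥0∞) :
    ∃ G : X → ℝ≥0∞, Measurable G ∧ g ≤ G ∧ distribution μ G = distribution μ g := by
  classical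
  set T : ℚ → Set X := fun r => toMeasurable μ {x | ENNReal.ofReal r < g x}
  set G : X → ℝ≥0∞ := fun x => ⨅ r : ℚ, if x ∈ T r then ∞ else ENNReal.ofReal r
  have hG_meas : Measurable G := Measurable.iInf fun r =>
    Measurable.ite (measurableSet_toMeasurable _ _) measurable_const measurable_const
  have hgG : g ≤ G := fun x => le_iInf fun r => by
    split_ifs with hx
    · exact le_top
    · exact not_lt.1 fun hlt => hx (subset_toMeasurable _ _ hlt)
  have measure_G_le (r : ℚ) : μ {x | ENNReal.ofReal r < G x} ≤ μ {x | ENNReal.ofReal r < g x} := by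
    rw [← measure_toMeasurable {x | ENNReal.ofReal r < g x}]
    refine measure_mono fun x hx => ?_
    by_contra hxT
    have hGr : G x ≤ if x ∈ T r then ∞ else ENNReal.ofReal r := iInf_le _ r
    rw [if_neg hxT] at hGr
    exact hGr.not_gt hx
  refine ⟨G, hG_meas, hgG, funext fun σ => le_antisymm ?_ ?_⟩
  · have hsub : {x | ENNReal.ofReal σ < G x} ⊆
        ⋃ r : {r : ℚ // ENNReal.ofReal σ < ENNReal.ofReal r}, {x | ENNReal.ofReal r < G x} := by
      intro x hx
      obtain ⟨r, -, hσr, hrG⟩ := ENNReal.lt_iff_exists_rat_btwn.1 hx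
      exact mem_iUnion.2 ⟨⟨r, hσr⟩, hrG⟩
    have hanti : Antitone fun r : {r : ℚ // ENNReal.ofReal σ < ENNReal.ofReal r} =>
        {x | ENNReal.ofReal r < G x} := fun r r' hr x hx =>
      (ENNReal.ofReal_le_ofReal (Rat.cast_le.2 hr)).trans_lt hx
    refine (measure_mono hsub).trans ?_
    rw [hanti.directed_le.measure_iUnion]
    exact iSup_le fun r => (measure_G_le r).trans (measure_mono fun x hx => r.2.trans hx)
  · exact measure_mono fun x hx => lt_of_lt_of_le hx (hgG x)

lemma ofReal_mul_mul_rpow_div_eq_lintegral {p ρ l : ℝ} (hp : 0 < p) (hρ : 0 < ρ) (hl : 0 < l)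
    (v : ℝ≥0∞) :
    ENNReal.ofReal p * ((ENNReal.ofReal l * v ^ p⁻¹) ^ ρ / ENNReal.ofReal l) =
      ENNReal.ofReal (ρ * l ^ (ρ - 1)) *
        ∫⁻ s in posBelow v, ENNReal.ofReal (s ^ (ρ / p - 1)) := by
  have hv : v ^ (ρ / p) = ENNReal.ofReal (ρ / p) *
      ∫⁻ s in posBelow v, ENNReal.ofReal (s ^ (ρ / p - 1)) := by
    rw [← lintegral_posBelow_mul_rpow_sub_one (div_pos hρ hp),
      ← lintegral_const_mul' _ _ ENNReal.ofReal_ne_top]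
    simp only [ENNReal.ofReal_mul (div_pos hρ hp).le]
  have hcoef : ρ * l ^ (ρ - 1) = p * (l ^ ρ * l⁻¹) * (ρ / p) := by
    rw [Real.rpow_sub_one hl.ne']
    field_simp
  rw [ENNReal.mul_rpow_of_nonneg _ _ hρ.le, ← ENNReal.rpow_mul, inv_mul_eq_div, hv, hcoef,
    ENNReal.ofReal_mul (by positivity), ENNReal.ofReal_mul hp.le,
    ENNReal.ofReal_mul (by positivity), ENNReal.ofReal_rpow_of_pos hl,
    ENNReal.ofReal_inv_of_pos hl, ENNReal.div_eq_inv_mul]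
  ring

lemma lorentzNorm_eq_lintegral_rearrangement {p : ℝ} (hp : 0 < p) {r : ℝ≥0∞} (hr0 : r ≠ 0)
    (hr : r ≠ ∞) (μ : Measure X) (g : X → ℝ≥0∞) :
    lorentzNorm μ (ENNReal.ofReal p) r g =
      (∫⁻ s in Ioi (0 : ℝ), ENNReal.ofReal (s ^ (r.toReal / p - 1)) *
        rearrangement μ g s ^ r.toReal) ^ r⁻¹.toReal := by
  set ρ := r.toReal
  have hρ : 0 < ρ := ENNReal.toReal_pos hr0 hr
  set m := distribution μ g
  have hp_inv : (ENNReal.ofReal p)⁻¹.toReal = p⁻¹ := by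
    rw [ENNReal.toReal_inv, ENNReal.toReal_ofReal hp.le]
  rw [lorentzNorm, if_neg hr, hp_inv, ← lintegral_const_mul' _ _ ENNReal.ofReal_ne_top]
  congr 1
  calc ∫⁻ l in Ioi (0 : ℝ), ENNReal.ofReal p *
        ((ENNReal.ofReal l * m l ^ p⁻¹) ^ ρ / ENNReal.ofReal l)
      = ∫⁻ l in Ioi (0 : ℝ), ENNReal.ofReal (ρ * l ^ (ρ - 1)) *
          ∫⁻ s in posBelow (m l), ENNReal.ofReal (s ^ (ρ / p - 1)) :=
        setLIntegral_congr_fun measurableSet_Ioi fun l hl =>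
          ofReal_mul_mul_rpow_div_eq_lintegral hp hρ hl (m l)
    _ = ∫⁻ s in Ioi (0 : ℝ), ENNReal.ofReal (s ^ (ρ / p - 1)) *
          ∫⁻ l in {l | ENNReal.ofReal s < m l}, ENNReal.ofReal (ρ * l ^ (ρ - 1))
            ∂volume.restrict (Ioi 0) :=
        lintegral_mul_lintegral_posBelow (by fun_prop) (antitone_distribution μ g).measurable
          (by fun_prop)
    _ = ∫⁻ s in Ioi (0 : ℝ), ENNReal.ofReal (s ^ (ρ / p - 1)) * rearrangement μ g s ^ ρ := by
        refine lintegral_congr fun s => ?_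
        have hmeas : MeasurableSet {l | ENNReal.ofReal s < m l} :=
          measurableSet_lt measurable_const (antitone_distribution μ g).measurable
        rw [Measure.restrict_restrict hmeas, inter_comm, ← lintegral_posBelow_mul_rpow_sub_one hρ]
        exact congrArg _ (setLIntegral_congr
          (setOf_lt_ae_eq_posBelow (antitone_distribution μ g) _))

lemma lintegral_Ioi_eq_lintegral_exp (φ : ℝ → ℝ≥0∞) :
    ∫⁻ s in Ioi (0 : ℝ), φ s = ∫⁻ x : ℝ, ENNReal.ofReal (Real.exp x) * φ (Real.exp x) := by
  have h := lintegral_image_eq_lintegral_abs_deriv_mul MeasurableSet.univ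
    (fun x _ => (Real.hasDerivAt_exp x).hasDerivWithinAt) Real.exp_injective.injOn φ
  rw [image_univ, Real.range_exp] at h
  simpa only [Real.abs_exp, Measure.restrict_univ] using h

lemma lorentzNorm_eq_eLpNorm_rearrangement_exp {p : ℝ} (hp : 0 < p) {r : ℝ≥0∞} (hr0 : r ≠ 0)
    (hr : r ≠ ∞) (μ : Measure X) (g : X → ℝ≥0∞) :
    lorentzNorm μ (ENNReal.ofReal p) r g =
      eLpNorm (fun x : ℝ => ENNReal.ofReal (Real.exp (x / p)) * rearrangement μ g (Real.exp x))
        r volume := by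
  have hρ : 0 < r.toReal := ENNReal.toReal_pos hr0 hr
  rw [lorentzNorm_eq_lintegral_rearrangement hp hr0 hr, lintegral_Ioi_eq_lintegral_exp,
    eLpNorm_eq_lintegral_rpow_enorm_toReal hr0 hr, ENNReal.toReal_inv, one_div]
  congr 1
  refine lintegral_congr fun x => ?_
  rw [enorm_eq_self, ENNReal.mul_rpow_of_nonneg _ _ hρ.le,
    ENNReal.ofReal_rpow_of_pos (Real.exp_pos _), ← mul_assoc,
    ← ENNReal.ofReal_mul (Real.exp_pos x).le, ← Real.exp_mul, ← Real.exp_mul, ← Real.exp_add]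
  ring_nf

end Rearrangement

section Minkowski

variable {S X : Type*} [MeasurableSpace S] [MeasurableSpace X]

lemma lintegral_le_of_forall_le_of_ne_top {ν : Measure X} [SigmaFinite ν] {f : X → ℝ≥0∞}
    (hf : Measurable f) {c : ℝ≥0∞}
    (h : ∀ w, Measurable w → w ≤ f → ∫⁻ x, w x ∂ν ≠ ∞ → ∫⁻ x, w x ∂ν ≤ c) :
    ∫⁻ x, f x ∂ν ≤ c := by
  set w : ℕ → X → ℝ≥0∞ := fun n => (spanningSets ν n).indicator fun x => min (f x) n
  have hw_meas (n : ℕ) : Measurable (w n) :=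
    (hf.min measurable_const).indicator (measurableSet_spanningSets ν n)
  have hw_mono : Monotone w := fun m n hmn x =>
    indicator_le_indicator_of_subset (monotone_spanningSets ν hmn) (fun _ => zero_le) x |>.trans <|
      indicator_le_indicator (min_le_min_left _ (by exact_mod_cast hmn))
  have hw_sup (x : X) : ⨆ n, w n x = f x := by
    refine le_antisymm (iSup_le fun n => (indicator_le_self' (fun _ _ => zero_le) x).trans
      (min_le_left _ _)) (le_of_forall_lt fun a ha => ?_)
    obtain ⟨k, hk⟩ := ENNReal.exists_nat_gt ha.ne_top
    have hx : x ∈ spanningSets ν (max k (spanningSetsIndex ν x)) :=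
      monotone_spanningSets ν (le_max_right _ _) (mem_spanningSetsIndex ν x)
    refine lt_iSup_iff.2 ⟨max k (spanningSetsIndex ν x), ?_⟩
    rw [show w _ x = _ from indicator_of_mem hx _]
    exact lt_min ha (hk.trans_le (by exact_mod_cast le_max_left _ _))
  have hw_fin (n : ℕ) : ∫⁻ x, w n x ∂ν ≠ ∞ := by
    refine ne_top_of_le_ne_top (b := n * ν (spanningSets ν n))
      (ENNReal.mul_ne_top (ENNReal.natCast_ne_top n) (measure_spanningSets_lt_top ν n).ne) ?_
    rw [← lintegral_indicator_const (measurableSet_spanningSets ν n)]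
    exact lintegral_mono fun x => indicator_le_indicator (min_le_right _ _)
  calc ∫⁻ x, f x ∂ν = ⨆ n, ∫⁻ x, w n x ∂ν := by
        simp only [← hw_sup, lintegral_iSup hw_meas hw_mono]
    _ ≤ c := iSup_le fun n => h _ (hw_meas n) (hw_sup · ▸ le_iSup (w · _) n) (hw_fin n)

lemma rpow_one_div_le_of_le_mul_rpow {p q : ℝ} (hpq : p.HolderConjugate q) {a b : ℝ≥0∞}
    (ha : a ≠ ∞) (h : a ≤ b * a ^ (1 / q)) : a ^ (1 / p) ≤ b := by
  rcases eq_or_ne a 0 with rfl | ha0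
  · simp [hpq.pos]
  rw [one_div, ← hpq.symm.one_sub_inv, ENNReal.rpow_sub _ _ ha0 ha, ENNReal.rpow_one, ← one_div]
  exact ENNReal.div_le_of_le_mul h

variable {μ : Measure S} [SFinite μ] {ν : Measure X} {u : S → X → ℝ≥0∞}

lemma lintegral_rpow_le_of_le_lintegral [SFinite ν] (hu : Measurable (Function.uncurry u))
    {p q : ℝ} (hpq : p.HolderConjugate q) {w : X → ℝ≥0∞} (hw : Measurable w)
    (hwu : ∀ x, w x ≤ ∫⁻ s, u s x ∂μ) (hfin : ∫⁻ x, w x ^ p ∂ν ≠ ∞) :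
    (∫⁻ x, w x ^ p ∂ν) ^ (1 / p) ≤ ∫⁻ s, (∫⁻ x, u s x ^ p ∂ν) ^ (1 / p) ∂μ := by
  refine rpow_one_div_le_of_le_mul_rpow hpq hfin ?_
  calc ∫⁻ x, w x ^ p ∂ν
      ≤ ∫⁻ x, (∫⁻ s, u s x ∂μ) * w x ^ (p - 1) ∂ν := by
        refine lintegral_mono fun x => ?_
        calc w x ^ p = w x ^ (1 : ℝ) * w x ^ (p - 1) := by
              rw [← ENNReal.rpow_add_of_nonneg _ _ zero_le_one hpq.sub_one_pos.le,
                add_sub_cancel]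
          _ ≤ _ := by
              rw [ENNReal.rpow_one]
              gcongr
              exact hwu x
    _ = ∫⁻ x, ∫⁻ s, u s x * w x ^ (p - 1) ∂μ ∂ν :=
        lintegral_congr fun x => (lintegral_mul_const _ hu.of_uncurry_right).symm
    _ = ∫⁻ s, ∫⁻ x, u s x * w x ^ (p - 1) ∂ν ∂μ :=
        lintegral_lintegral_swap ((hu.comp measurable_swap).mul
          ((hw.comp measurable_fst).pow_const _)).aemeasurable
    _ ≤ ∫⁻ s, (∫⁻ x, u s x ^ p ∂ν) ^ (1 / p) * (∫⁻ x, w x ^ p ∂ν) ^ (1 / q) ∂μ :=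
        lintegral_mono fun s => ENNReal.lintegral_mul_rpow_le_lintegral_rpow_mul_lintegral_rpow
          hpq hu.of_uncurry_left.aemeasurable hw.aemeasurable
    _ = (∫⁻ s, (∫⁻ x, u s x ^ p ∂ν) ^ (1 / p) ∂μ) * (∫⁻ x, w x ^ p ∂ν) ^ (1 / q) :=
        lintegral_mul_const' _ _ (ENNReal.rpow_ne_top_of_nonneg hpq.symm.one_div_nonneg hfin)

lemma lintegral_rpow_lintegral_le [SigmaFinite ν] (hu : Measurable (Function.uncurry u))
    {p q : ℝ} (hpq : p.HolderConjugate q) :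
    (∫⁻ x, (∫⁻ s, u s x ∂μ) ^ p ∂ν) ^ (1 / p) ≤ ∫⁻ s, (∫⁻ x, u s x ^ p ∂ν) ^ (1 / p) ∂μ := by
  have hp := hpq.pos
  have hU : Measurable fun x => (∫⁻ s, u s x ∂μ) ^ p := hu.lintegral_prod_left'.pow_const p
  rw [one_div, ENNReal.rpow_inv_le_iff hp]
  refine lintegral_le_of_forall_le_of_ne_top hU fun w hw hwU hfin => ?_
  have hwp (x : X) : (w x ^ p⁻¹) ^ p = w x := ENNReal.rpow_inv_rpow hp.ne' _
  rw [← ENNReal.rpow_inv_le_iff hp, ← one_div]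
  simpa only [hwp] using lintegral_rpow_le_of_le_lintegral hu hpq (hw.pow_const p⁻¹)
    (fun x => (ENNReal.rpow_inv_le_iff hp).2 (hwU x)) (by simpa only [hwp] using hfin)

lemma essSup_lintegral_le [SFinite ν] (hu : Measurable (Function.uncurry u)) :
    essSup (fun x => ∫⁻ s, u s x ∂μ) ν ≤ ∫⁻ s, essSup (u s) ν ∂μ := by
  have h_meas : Measurable fun s => essSup (u s) ν := by
    refine measurable_of_Ioi fun c => ?_
    have lt_essSup_iff (s : S) : c < essSup (u s) ν ↔ 0 < ν {x | c < u s x} := by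
      rw [← not_le, pos_iff_ne_zero, not_iff_not]
      refine Iff.trans ⟨fun h => (ENNReal.ae_le_essSup _).mono fun x hx => hx.trans h,
        essSup_le_of_ae_le c⟩ ?_
      simp only [ae_iff, not_le]
    simp only [preimage, mem_Ioi, lt_essSup_iff]
    exact measurable_measure_prodMk_left (measurableSet_lt measurable_const hu) measurableSet_Ioi
  have h_ae : ∀ᵐ x ∂ν, ∀ᵐ s ∂μ, u s x ≤ essSup (u s) ν := by
    refine (Measure.ae_ae_comm ?_).1 (Filter.Eventually.of_forall fun s => ENNReal.ae_le_essSup _)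
    exact measurableSet_le hu (h_meas.comp measurable_fst)
  exact essSup_le_of_ae_le _ (h_ae.mono fun x hx => lintegral_mono_ae hx)

theorem eLpNorm_lintegral_le [SigmaFinite ν] (hu : Measurable (Function.uncurry u)) {q : ℝ≥0∞}
    (hq : 1 ≤ q) :
    eLpNorm (fun x => ∫⁻ s, u s x ∂μ) q ν ≤ ∫⁻ s, eLpNorm (u s) q ν ∂μ := by
  rcases eq_or_ne q ∞ with rfl | hq_top
  · simpa only [eLpNorm_exponent_top, eLpNormEssSup, enorm_eq_self] using essSup_lintegral_le hu
  rcases hq.eq_or_lt with rfl | hq1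
  · simpa only [eLpNorm_one_eq_lintegral_enorm, enorm_eq_self] using
      (lintegral_lintegral_swap hu.aemeasurable).ge
  have hpq : q.toReal.HolderConjugate q.toReal.conjExponent :=
    .conjExponent (by simpa using ENNReal.toReal_strict_mono hq_top hq1)
  simpa only [eLpNorm_eq_lintegral_rpow_enorm_toReal (zero_lt_one.trans hq1).ne' hq_top,
    enorm_eq_self] using lintegral_rpow_lintegral_le hu hpq

end Minkowski

/-- A kernel lying in weak `L^{1/α}` in each variable, uniformly in the other one. The weak norms
are encoded by integrals over sets of given measure. -/
structure IsWeakKernel {X Y : Type*} [MeasurableSpace X] [MeasurableSpace Y] (μ : Measure X)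
    (ν : Measure Y) (α : ℝ) (C : ℝ≥0∞) (K : X → Y → ℝ≥0∞) : Prop where
  measurable : Measurable (Function.uncurry K)
  setLIntegral_left_le : ∀ y A, MeasurableSet A → ∫⁻ x in A, K x y ∂μ ≤ C * μ A ^ (1 - α)
  setLIntegral_right_le : ∀ x S, MeasurableSet S → ∫⁻ y in S, K x y ∂ν ≤ C * ν S ^ (1 - α)

section ONeil

lemma measurable_max_rpow (a α : ℝ) :
    Measurable fun s : ℝ => ENNReal.ofReal (max s a ^ (-α)) := by
  fun_prop

lemma mul_max_rpow_le_setLIntegral {a b α : ℝ} (hα : 0 ≤ α) (ha : 0 < a) :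
    ENNReal.ofReal (b * max b a ^ (-α)) ≤
      ∫⁻ s in Ioo 0 b, ENNReal.ofReal (max s a ^ (-α)) := by
  calc ENNReal.ofReal (b * max b a ^ (-α))
      = ∫⁻ _ in Ioo 0 b, ENNReal.ofReal (max b a ^ (-α)) := by
        rw [setLIntegral_const, Real.volume_Ioo, sub_zero, mul_comm, ENNReal.ofReal_mul
          (Real.rpow_nonneg (ha.le.trans (le_max_right b a)) _)]
    _ ≤ _ := setLIntegral_mono (measurable_max_rpow a α) fun s hs => ENNReal.ofReal_le_ofReal <|
        Real.rpow_le_rpow_of_nonpos (lt_max_of_lt_right ha) (max_le_max_right a hs.2.le)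
          (neg_nonpos.2 hα)

lemma min_rpow_le_setLIntegral_posBelow {a α : ℝ} (hα0 : 0 ≤ α) (hα1 : α < 1) (ha : 0 < a)
    (v : ℝ≥0∞) :
    min (v ^ (1 - α)) (v * ENNReal.ofReal (a ^ (-α))) ≤
      ∫⁻ s in posBelow v, ENNReal.ofReal (max s a ^ (-α)) := by
  have h1α : 0 < 1 - α := sub_pos.2 hα1
  have rpow_le {b : ℝ} (hab : a ≤ b) : ENNReal.ofReal (b ^ (1 - α)) ≤
      ∫⁻ s in Ioo 0 b, ENNReal.ofReal (max s a ^ (-α)) := by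
    have hb : 0 < b := ha.trans_le hab
    have := mul_max_rpow_le_setLIntegral (b := b) hα0 ha
    rwa [max_eq_left hab, ← Real.rpow_one_add' hb.le (by linarith), ← sub_eq_add_neg] at this
  rcases eq_or_ne v ∞ with rfl | hv
  · refine le_top.trans (ENNReal.eq_top_of_forall_nnreal_le fun c => ?_).ge
    calc (c : ℝ≥0∞) = ENNReal.ofReal (((c : ℝ) ^ (1 - α)⁻¹) ^ (1 - α)) := by
          rw [Real.rpow_inv_rpow c.coe_nonneg h1α.ne', ENNReal.ofReal_coe_nnreal]
      _ ≤ ENNReal.ofReal (max a ((c : ℝ) ^ (1 - α)⁻¹) ^ (1 - α)) := by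
          gcongr
          exact le_max_right _ _
      _ ≤ _ := rpow_le (le_max_left _ _)
      _ ≤ _ := by
          rw [posBelow_top]
          exact lintegral_mono_set Ioo_subset_Ioi_self
  lift v to NNReal using hv
  rw [posBelow_of_ne_top ENNReal.coe_ne_top, ENNReal.coe_toReal]
  rcases le_total a v with hav | hva
  · refine (min_le_left _ _).trans ((rpow_le hav).trans' ?_)
    rw [← ENNReal.ofReal_rpow_of_nonneg v.coe_nonneg h1α.le, ENNReal.ofReal_coe_nnreal]
  · refine (min_le_right _ _).trans ((mul_max_rpow_le_setLIntegral hα0 ha).trans' ?_)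
    rw [max_eq_right hva, ENNReal.ofReal_mul v.coe_nonneg, ENNReal.ofReal_coe_nnreal]

variable {X Y : Type*} [MeasurableSpace X] [MeasurableSpace Y] {μ : Measure X} {ν : Measure Y}

lemma rearrangement_le_of_forall {g : X → ℝ≥0∞} {s : ℝ} {c : ℝ≥0∞}
    (h : ∀ σ, 0 < σ → ENNReal.ofReal s < distribution μ g σ → ENNReal.ofReal σ ≤ c) :
    rearrangement μ g s ≤ c := by
  rcases eq_or_ne c ∞ with rfl | hc
  · exact le_top
  calc rearrangement μ g s ≤ volume (Ioc 0 c.toReal) := measure_mono fun σ hσ =>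
        ⟨hσ.1, (ENNReal.ofReal_le_iff_le_toReal hc).1 (h σ hσ.1 hσ.2)⟩
    _ = c := by rw [Real.volume_Ioc, sub_zero, ENNReal.ofReal_toReal hc]

namespace IsWeakKernel

variable {α : ℝ} {C : ℝ≥0∞} {K : X → Y → ℝ≥0∞}

lemma lintegral_lintegral_le [SFinite μ] [SFinite ν] (hK : IsWeakKernel μ ν α C K) {A : Set X}
    {S : Set Y} (hA : MeasurableSet A) (hS : MeasurableSet S) :
    ∫⁻ y in S, ∫⁻ x in A, K x y ∂μ ∂ν ≤
      C * min (μ A * ν S ^ (1 - α)) (ν S * μ A ^ (1 - α)) := by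
  rw [mul_min, le_min_iff]
  constructor
  · calc ∫⁻ y in S, ∫⁻ x in A, K x y ∂μ ∂ν = ∫⁻ x in A, ∫⁻ y in S, K x y ∂ν ∂μ :=
          (lintegral_lintegral_swap hK.measurable.aemeasurable).symm
      _ ≤ ∫⁻ _ in A, C * ν S ^ (1 - α) ∂μ :=
          lintegral_mono fun x => hK.setLIntegral_right_le x S hS
      _ = C * (μ A * ν S ^ (1 - α)) := by
          rw [setLIntegral_const]
          ring
  · calc ∫⁻ y in S, ∫⁻ x in A, K x y ∂μ ∂ν ≤ ∫⁻ _ in S, C * μ A ^ (1 - α) ∂ν :=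
          lintegral_mono fun y => hK.setLIntegral_left_le y A hA
      _ = C * (ν S * μ A ^ (1 - α)) := by
          rw [setLIntegral_const]
          ring

lemma lintegral_lintegral_le_setLIntegral_posBelow [SFinite μ] [SFinite ν]
    (hK : IsWeakKernel μ ν α C K) (hα0 : 0 ≤ α) (hα1 : α < 1) {a : ℝ} (ha : 0 < a) {A : Set X}
    (hA : MeasurableSet A) (haA : ENNReal.ofReal a ≤ μ A) (hA_top : μ A ≠ ∞) {S : Set Y}
    (hS : MeasurableSet S) :
    ∫⁻ y in S, ∫⁻ x in A, K x y ∂μ ∂ν ≤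
      μ A * C * ∫⁻ s in posBelow (ν S), ENNReal.ofReal (max s a ^ (-α)) := by
  have hA0 : μ A ≠ 0 := ((ENNReal.ofReal_pos.2 ha).trans_le haA).ne'
  calc ∫⁻ y in S, ∫⁻ x in A, K x y ∂μ ∂ν
      ≤ C * min (μ A * ν S ^ (1 - α)) (ν S * μ A ^ (1 - α)) := hK.lintegral_lintegral_le hA hS
    _ = μ A * C * min (ν S ^ (1 - α)) (ν S * μ A ^ (-α)) := by
        rw [sub_eq_add_neg (1 : ℝ) α, ENNReal.rpow_add _ _ hA0 hA_top, ENNReal.rpow_one,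
          mul_left_comm (ν S), ← mul_min, ← mul_assoc, mul_comm C]
    _ ≤ μ A * C * min (ν S ^ (1 - α)) (ν S * ENNReal.ofReal (a ^ (-α))) := by
        rw [← ENNReal.ofReal_rpow_of_pos ha, ENNReal.rpow_neg, ENNReal.rpow_neg]
        gcongr
    _ ≤ _ := by
        gcongr
        exact min_rpow_le_setLIntegral_posBelow hα0 hα1 ha _

lemma setLIntegral_lintegral_mul_le [SFinite μ] [SFinite ν] (hK : IsWeakKernel μ ν α C K)
    (hα0 : 0 ≤ α) (hα1 : α < 1) {a : ℝ} (ha : 0 < a) {A : Set X} (hA : MeasurableSet A)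
    (haA : ENNReal.ofReal a ≤ μ A) (hA_top : μ A ≠ ∞) {g : Y → ℝ≥0∞} (hg : Measurable g) :
    ∫⁻ x in A, ∫⁻ y, K x y * g y ∂ν ∂μ ≤
      μ A * C * ∫⁻ s in Ioi 0, ENNReal.ofReal (max s a ^ (-α)) * rearrangement ν g s := by
  have hKA : Measurable fun y => ∫⁻ x in A, K x y ∂μ := hK.measurable.lintegral_prod_left'
  have hm := (antitone_distribution ν g).measurable
  have hφ := measurable_max_rpow a α
  calc ∫⁻ x in A, ∫⁻ y, K x y * g y ∂ν ∂μ
      = ∫⁻ y, (∫⁻ x in A, K x y ∂μ) * (∫⁻ _ in posBelow (g y), 1) ∂ν := by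
        rw [lintegral_lintegral_swap (hK.measurable.mul (hg.comp measurable_snd)).aemeasurable]
        refine lintegral_congr fun y => ?_
        rw [setLIntegral_one, volume_posBelow, lintegral_mul_const _ hK.measurable.of_uncurry_right]
    _ = ∫⁻ l in Ioi 0, ∫⁻ y in {y | ENNReal.ofReal l < g y}, ∫⁻ x in A, K x y ∂μ ∂ν := by
        rw [lintegral_mul_lintegral_posBelow hKA.aemeasurable hg measurable_const]
        simp only [one_mul]
    _ ≤ ∫⁻ l in Ioi 0, μ A * C *
          ∫⁻ s in posBelow (distribution ν g l), ENNReal.ofReal (max s a ^ (-α)) :=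
        lintegral_mono fun l => hK.lintegral_lintegral_le_setLIntegral_posBelow hα0 hα1 ha hA haA
          hA_top (measurableSet_lt measurable_const hg)
    _ = ∫⁻ s in Ioi 0, μ A * C *
          (ENNReal.ofReal (max s a ^ (-α)) * rearrangement ν g s) := by
        rw [lintegral_mul_lintegral_posBelow measurable_const.aemeasurable hm hφ]
        refine lintegral_congr fun s => ?_
        rw [setLIntegral_const, Measure.restrict_apply (measurableSet_lt measurable_const hm),
          inter_comm, mul_left_comm]
        rfl
    _ = _ := lintegral_const_mul _ (hφ.mul (antitone_rearrangement ν g).measurable)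

lemma rearrangement_lintegral_le [SigmaFinite μ] [SFinite ν] (hK : IsWeakKernel μ ν α C K)
    (hα0 : 0 ≤ α) (hα1 : α < 1) {g : Y → ℝ≥0∞} (hg : Measurable g) {a : ℝ} (ha : 0 < a) :
    rearrangement μ (fun x => ∫⁻ y, K x y * g y ∂ν) a ≤
      C * ∫⁻ s in Ioi 0, ENNReal.ofReal (max s a ^ (-α)) * rearrangement ν g s := by
  refine rearrangement_le_of_forall fun σ _ hσ => ?_
  have hTg : Measurable fun x => ∫⁻ y, K x y * g y ∂ν :=
    (hK.measurable.mul (hg.comp measurable_snd)).lintegral_prod_right'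
  obtain ⟨A, hA, hA_sub, haA, hA_top⟩ :=
    Measure.exists_subset_measure_lt_top (measurableSet_lt measurable_const hTg) hσ
  have hA0 : μ A ≠ 0 := ((ENNReal.ofReal_pos.2 ha).trans haA).ne'
  refine (ENNReal.mul_le_mul_iff_right hA0 hA_top.ne).1 ?_
  calc μ A * ENNReal.ofReal σ = ∫⁻ _ in A, ENNReal.ofReal σ ∂μ := by
        rw [setLIntegral_const, mul_comm]
    _ ≤ ∫⁻ x in A, ∫⁻ y, K x y * g y ∂ν ∂μ :=
        setLIntegral_mono hTg fun x hx => (hA_sub hx).le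
    _ ≤ _ := hK.setLIntegral_lintegral_mul_le hα0 hα1 ha hA haA.le hA_top.ne hg
    _ = _ := mul_assoc _ _ _

end IsWeakKernel

end ONeil

section Young

lemma eLpNorm_lconvolution_le {G : Type*} [AddCommGroup G] [MeasurableSpace G] [MeasurableAdd₂ G]
    [MeasurableNeg G] {μ : Measure G} [SigmaFinite μ] [μ.IsAddLeftInvariant] {k f : G → ℝ≥0∞}
    (hk : Measurable k) (hf : Measurable f) {r : ℝ≥0∞} (hr : 1 ≤ r) :
    eLpNorm (k ⋆ₗ[μ] f) r μ ≤ (∫⁻ z, k z ∂μ) * eLpNorm f r μ := by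
  have hu : Measurable (Function.uncurry fun z x => k z * f (-z + x)) :=
    (hk.comp measurable_fst).mul (hf.comp (measurable_fst.neg.add measurable_snd))
  have eLpNorm_translate (z : G) : eLpNorm (fun x => f (-z + x)) r μ = eLpNorm f r μ :=
    eLpNorm_comp_measurePreserving hf.aestronglyMeasurable (measurePreserving_add_left μ (-z))
  calc eLpNorm (k ⋆ₗ[μ] f) r μ ≤ ∫⁻ z, eLpNorm (fun x => k z * f (-z + x)) r μ ∂μ :=
        eLpNorm_lintegral_le hu hr
    _ ≤ ∫⁻ z, k z * eLpNorm f r μ ∂μ := by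
        refine lintegral_mono fun z => ?_
        rw [← eLpNorm_translate z]
        exact eLpNorm_le_mul_eLpNorm_of_ae_le_mul'' r
          (hf.comp (measurable_const_add (-z))).aestronglyMeasurable (.of_forall fun _ => le_rfl)
    _ = _ := lintegral_mul_const _ hk

end Young

lemma lintegral_comp_abs (f : ℝ → ℝ≥0∞) : ∫⁻ x, f |x| = 2 * ∫⁻ x in Ioi 0, f x := by
  have hIoi : ∫⁻ x in Ioi 0, f |x| = ∫⁻ x in Ioi 0, f x :=
    setLIntegral_congr_fun measurableSet_Ioi fun x hx => by simp only [abs_of_pos (mem_Ioi.1 hx)]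
  have hIic : ∫⁻ x in Iic 0, f |x| = ∫⁻ x in Ioi 0, f |x| := by
    have := (Measure.measurePreserving_neg volume).setLIntegral_comp_preimage_emb
      (MeasurableEquiv.neg ℝ).measurableEmbedding (fun x => f |x|) (Iio 0)
    simp only [abs_neg, neg_preimage, neg_Iio, neg_zero] at this
    rw [setLIntegral_congr Iio_ae_eq_Iic.symm, this]
  rw [← lintegral_add_compl _ (measurableSet_Iic (a := (0 : ℝ))), compl_Iic, hIic, hIoi, two_mul]

lemma lintegral_exp_neg_mul_abs_ne_top {c : ℝ} (hc : 0 < c) :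
    ∫⁻ z : ℝ, ENNReal.ofReal (Real.exp (-c * |z|)) ≠ ∞ := by
  rw [lintegral_comp_abs fun z => ENNReal.ofReal (Real.exp (-c * z))]
  exact ENNReal.mul_ne_top ENNReal.ofNat_ne_top
    (integrableOn_exp_mul_Ioi (neg_lt_zero.2 hc) 0).lintegral_lt_top.ne

section HardyLittlewoodSobolev

lemma exp_mul_max_exp_rpow_le {p₀ p₁ α : ℝ} (hα : p₁⁻¹ = p₀⁻¹ + α - 1) (x y : ℝ) :
    Real.exp (x / p₁) * (Real.exp y * max (Real.exp y) (Real.exp x) ^ (-α)) ≤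
      Real.exp (y / p₀) * Real.exp (-min (p₁⁻¹) (1 - p₀⁻¹) * |-y + x|) := by
  rw [← Real.exp_monotone.map_max, ← Real.exp_mul, ← Real.exp_add, ← Real.exp_add, ← Real.exp_add,
    Real.exp_le_exp, div_eq_mul_inv, div_eq_mul_inv]
  rcases le_total x y with h | h
  · have := mul_le_mul_of_nonneg_right (min_le_left p₁⁻¹ (1 - p₀⁻¹)) (sub_nonneg.2 h)
    rw [max_eq_left h, abs_of_nonpos (by linarith)]
    linear_combination this + y * hα
  · have := mul_le_mul_of_nonneg_right (min_le_right p₁⁻¹ (1 - p₀⁻¹)) (sub_nonneg.2 h)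
    rw [max_eq_right h, abs_of_nonneg (by linarith)]
    linear_combination this + x * hα

variable {X Y : Type*} [MeasurableSpace X] [MeasurableSpace Y] {μ : Measure X} {ν : Measure Y}
  [SigmaFinite μ] [SFinite ν] {α : ℝ} {C : ℝ≥0∞} {K : X → Y → ℝ≥0∞}

lemma IsWeakKernel.exp_mul_rearrangement_lintegral_le (hK : IsWeakKernel μ ν α C K) {p₀ p₁ : ℝ}
    (hα : p₁⁻¹ = p₀⁻¹ + α - 1) (hα0 : 0 ≤ α) (hα1 : α < 1) {G : Y → ℝ≥0∞} (hG : Measurable G)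
    (x : ℝ) :
    ENNReal.ofReal (Real.exp (x / p₁)) *
        rearrangement μ (fun x => ∫⁻ y, K x y * G y ∂ν) (Real.exp x) ≤
      C * ((fun y => ENNReal.ofReal (Real.exp (y / p₀)) * rearrangement ν G (Real.exp y)) ⋆ₗ[volume]
        fun z => ENNReal.ofReal (Real.exp (-min p₁⁻¹ (1 - p₀⁻¹) * |z|))) x := by
  have hG_rearr : Measurable (rearrangement ν G) := (antitone_rearrangement ν G).measurable
  calc ENNReal.ofReal (Real.exp (x / p₁)) *
        rearrangement μ (fun x => ∫⁻ y, K x y * G y ∂ν) (Real.exp x)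
      ≤ ENNReal.ofReal (Real.exp (x / p₁)) * (C * ∫⁻ s in Ioi 0,
          ENNReal.ofReal (max s (Real.exp x) ^ (-α)) * rearrangement ν G s) := by
        gcongr
        exact hK.rearrangement_lintegral_le hα0 hα1 hG (Real.exp_pos x)
    _ = C * ∫⁻ y : ℝ, ENNReal.ofReal (Real.exp (x / p₁) *
          (Real.exp y * max (Real.exp y) (Real.exp x) ^ (-α))) *
            rearrangement ν G (Real.exp y) := by
        rw [lintegral_Ioi_eq_lintegral_exp, mul_left_comm, ← lintegral_const_mul _ (by fun_prop)]
        congr 2 with y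
        rw [ENNReal.ofReal_mul (Real.exp_pos _).le, ENNReal.ofReal_mul (Real.exp_pos _).le]
        ring
    _ ≤ _ := by
        rw [lconvolution_def]
        gcongr C * ∫⁻ y, ?_ with y
        rw [mul_right_comm, ← ENNReal.ofReal_mul (Real.exp_pos _).le]
        gcongr ENNReal.ofReal ?_ * _
        exact exp_mul_max_exp_rpow_le hα x y

theorem IsWeakKernel.lorentzNorm_lintegral_le (hK : IsWeakKernel μ ν α C K) {p₀ p₁ : ℝ}
    (hp₀ : 0 < p₀) (hp₁ : 0 < p₁) (hα : p₁⁻¹ = p₀⁻¹ + α - 1) (hα0 : 0 ≤ α) (hα1 : α < 1)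
    {r : ℝ≥0∞} (hr1 : 1 ≤ r) (hr : r ≠ ∞) (g : Y → ℝ≥0∞) :
    lorentzNorm μ (ENNReal.ofReal p₁) r (fun x => ∫⁻ y, K x y * g y ∂ν) ≤
      C * (∫⁻ z, ENNReal.ofReal (Real.exp (-min p₁⁻¹ (1 - p₀⁻¹) * |z|))) *
        lorentzNorm ν (ENNReal.ofReal p₀) r g := by
  obtain ⟨G, hG, hgG, hdist⟩ := exists_measurable_ge_distribution_eq ν g
  set f : ℝ → ℝ≥0∞ := fun y => ENNReal.ofReal (Real.exp (y / p₀)) * rearrangement ν G (Real.exp y)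
  set k : ℝ → ℝ≥0∞ := fun z => ENNReal.ofReal (Real.exp (-min p₁⁻¹ (1 - p₀⁻¹) * |z|))
  have hk : Measurable k := by fun_prop
  have hG_rearr : Measurable (rearrangement ν G) := (antitone_rearrangement ν G).measurable
  have hf : Measurable f := by fun_prop
  have hr0 : r ≠ 0 := (one_pos.trans_le hr1).ne'
  calc lorentzNorm μ (ENNReal.ofReal p₁) r (fun x => ∫⁻ y, K x y * g y ∂ν)
      ≤ lorentzNorm μ (ENNReal.ofReal p₁) r (fun x => ∫⁻ y, K x y * G y ∂ν) :=
        lorentzNorm_mono _ _ fun x => lintegral_mono fun y => mul_le_mul_right (hgG y) _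
    _ ≤ C * eLpNorm (k ⋆ₗ[volume] f) r volume := by
        rw [lorentzNorm_eq_eLpNorm_rearrangement_exp hp₁ hr0 hr, lconvolution_comm]
        exact eLpNorm_le_mul_eLpNorm_of_ae_le_mul'' r (by fun_prop)
          (.of_forall fun x => hK.exp_mul_rearrangement_lintegral_le hα hα0 hα1 hG x)
    _ ≤ C * ((∫⁻ z, k z) * eLpNorm f r volume) := by
        gcongr
        exact eLpNorm_lconvolution_le hk hf hr1
    _ = _ := by
        rw [← lorentzNorm_congr_distribution _ _ hdist,
          lorentzNorm_eq_eLpNorm_rearrangement_exp hp₀ hr0 hr, mul_assoc]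

end HardyLittlewoodSobolev

section PowerKernel

lemma lintegral_ball_abs_rpow_neg {α : ℝ} (hα : α < 1) {R : ℝ} (hR : 0 ≤ R) :
    ∫⁻ τ in Metric.ball 0 R, ENNReal.ofReal (|τ| ^ (-α)) =
      ENNReal.ofReal (2 / (1 - α) * R ^ (1 - α)) := by
  have h1α : 0 < 1 - α := sub_pos.2 hα
  calc ∫⁻ τ in Metric.ball 0 R, ENNReal.ofReal (|τ| ^ (-α))
      = ∫⁻ τ, (Iio R).indicator (fun x => ENNReal.ofReal (x ^ (-α))) |τ| := by
        rw [← lintegral_indicator measurableSet_ball]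
        refine lintegral_congr fun τ => ?_
        simp only [indicator, mem_ball_zero_iff, Real.norm_eq_abs, mem_Iio]
    _ = 2 * ∫⁻ σ in Ioo 0 R, ENNReal.ofReal (σ ^ (-α)) := by
        rw [lintegral_comp_abs, setLIntegral_indicator measurableSet_Iio, Iio_inter_Ioi]
    _ = 2 * ∫⁻ σ in Ioo 0 R,
          ENNReal.ofReal (1 - α)⁻¹ * ENNReal.ofReal ((1 - α) * σ ^ (1 - α - 1)) := by
        congr 2 with σ
        rw [← ENNReal.ofReal_mul (inv_pos.2 h1α).le, inv_mul_cancel_left₀ h1α.ne', sub_sub,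
          add_comm α, ← sub_sub, sub_self, zero_sub]
    _ = _ := by
        rw [lintegral_const_mul _ (by fun_prop), lintegral_Ioo_mul_rpow_sub_one h1α hR,
          ← ENNReal.ofReal_mul (inv_pos.2 h1α).le, ← ENNReal.ofReal_ofNat,
          ← ENNReal.ofReal_mul zero_le_two, ← mul_assoc, div_eq_mul_inv]

lemma setLIntegral_abs_rpow_neg_le {α : ℝ} (hα0 : 0 ≤ α) (hα1 : α < 1) (S : Set ℝ) :
    ∫⁻ τ in S, ENNReal.ofReal (|τ| ^ (-α)) ≤
      ENNReal.ofReal (1 + 2 / (1 - α)) * volume S ^ (1 - α) := by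
  have h1α : 0 < 1 - α := sub_pos.2 hα1
  have hC : 0 < 1 + 2 / (1 - α) := by positivity
  rcases eq_or_ne (volume S) ∞ with hS | hS
  · rw [hS, ENNReal.top_rpow_of_pos h1α, ENNReal.mul_top (ENNReal.ofReal_pos.2 hC).ne']
    exact le_top
  rcases eq_or_ne (volume S) 0 with hS0 | hS0
  · rw [setLIntegral_measure_zero _ _ hS0]
    exact zero_le
  set R := (volume S).toReal
  have hR : 0 < R := ENNReal.toReal_pos hS0 hS
  have hSR : volume S = ENNReal.ofReal R := (ENNReal.ofReal_toReal hS).symm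
  calc ∫⁻ τ in S, ENNReal.ofReal (|τ| ^ (-α))
      = (∫⁻ τ in S ∩ Metric.ball 0 R, ENNReal.ofReal (|τ| ^ (-α))) +
          ∫⁻ τ in S \ Metric.ball 0 R, ENNReal.ofReal (|τ| ^ (-α)) :=
        (lintegral_inter_add_sdiff _ _ measurableSet_ball).symm
    _ ≤ (∫⁻ τ in Metric.ball 0 R, ENNReal.ofReal (|τ| ^ (-α))) +
          ∫⁻ _ in S \ Metric.ball 0 R, ENNReal.ofReal (R ^ (-α)) := by
        refine add_le_add (lintegral_mono_set inter_subset_right)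
          (setLIntegral_mono measurable_const fun τ hτ => ENNReal.ofReal_le_ofReal ?_)
        have hRτ : R ≤ |τ| := by simpa using hτ.2
        exact Real.rpow_le_rpow_of_nonpos hR hRτ (neg_nonpos.2 hα0)
    _ ≤ ENNReal.ofReal (2 / (1 - α) * R ^ (1 - α)) +
          ENNReal.ofReal (R ^ (-α)) * ENNReal.ofReal R := by
        rw [lintegral_ball_abs_rpow_neg hα1 hR.le, setLIntegral_const, ← hSR]
        gcongr
        exact sdiff_subset
    _ = _ := by
        rw [← ENNReal.ofReal_mul (by positivity), ← ENNReal.ofReal_add (by positivity)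
          (by positivity), hSR, ENNReal.ofReal_rpow_of_pos hR, ← ENNReal.ofReal_mul hC.le,
          ← Real.rpow_add_one hR.ne', neg_add_eq_sub]
        congr 1
        ring

lemma isWeakKernel_abs_sub_rpow_neg {α : ℝ} (hα0 : 0 ≤ α) (hα1 : α < 1) :
    IsWeakKernel volume volume α (ENNReal.ofReal (1 + 2 / (1 - α)))
      fun t s : ℝ => ENNReal.ofReal (|t - s| ^ (-α)) := by
  have setLIntegral_le (t : ℝ) (S : Set ℝ) : ∫⁻ s in S, ENNReal.ofReal (|s - t| ^ (-α)) ≤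
      ENNReal.ofReal (1 + 2 / (1 - α)) * volume S ^ (1 - α) := by
    have hpre := (measurePreserving_sub_right volume t).setLIntegral_comp_preimage_emb
      (measurableEmbedding_subRight t) (fun τ => ENNReal.ofReal (|τ| ^ (-α))) ((· + t) ⁻¹' S)
    simp only [← preimage_comp, Function.comp_def, sub_add_cancel, preimage_id'] at hpre
    rw [hpre, ← measure_preimage_add_right volume t S]
    exact setLIntegral_abs_rpow_neg_le hα0 hα1 _
  exact ⟨by fun_prop, fun s A _ => setLIntegral_le s A, fun t S _ => by
    simpa only [abs_sub_comm t] using setLIntegral_le t S⟩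

lemma IsWeakKernel.const_mul {X Y : Type*} [MeasurableSpace X] [MeasurableSpace Y] {μ : Measure X}
    {ν : Measure Y} {α : ℝ} {C : ℝ≥0∞} {K : X → Y → ℝ≥0∞} (hK : IsWeakKernel μ ν α C K)
    (c : ℝ≥0∞) : IsWeakKernel μ ν α (c * C) fun x y => c * K x y where
  measurable := hK.measurable.const_mul c
  setLIntegral_left_le y A hA := by
    rw [lintegral_const_mul _ hK.measurable.of_uncurry_right, mul_assoc]
    gcongr
    exact hK.setLIntegral_left_le y A hA
  setLIntegral_right_le x S hS := by
    rw [lintegral_const_mul _ hK.measurable.of_uncurry_left, mul_assoc]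
    gcongr
    exact hK.setLIntegral_right_le x S hS

end PowerKernel

section MinkowskiBochner

open Filter

variable {S X F : Type*} [MeasurableSpace S] {μ : Measure S} [TopologicalSpace X]

lemma isClosed_setOf_aestronglyMeasurable [SequentialSpace X] [TopologicalSpace F]
    [TopologicalSpace.PseudoMetrizableSpace F] {u : S → X → F} (hu : ∀ᵐ s ∂μ, Continuous (u s)) :
    IsClosed {x | AEStronglyMeasurable (fun s => u s x) μ} := by
  refine IsSeqClosed.isClosed fun xs x hxs hx =>
    aestronglyMeasurable_of_tendsto_ae atTop (f := fun n s => u s (xs n)) hxs ?_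
  filter_upwards [hu] with s hs
  exact (hs.tendsto x).comp hx

lemma exists_stronglyMeasurable_uncurry_ae_eq [TopologicalSpace.MetrizableSpace X]
    [SecondCountableTopology X] [MeasurableSpace X] [OpensMeasurableSpace X] [Zero F]
    [TopologicalSpace F] [TopologicalSpace.PseudoMetrizableSpace F] {u : S → X → F}
    (hu : ∀ᵐ s ∂μ, Continuous (u s)) (hmeas : ∀ x, AEStronglyMeasurable (fun s => u s x) μ) :
    ∃ v : S → X → F, StronglyMeasurable (Function.uncurry v) ∧ ∀ᵐ s ∂μ, u s = v s := by
  obtain ⟨D, hD_count, hD_dense⟩ := TopologicalSpace.exists_countable_dense X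
  have hD_mk : ∀ᵐ s ∂μ, ∀ x ∈ D, u s x = (hmeas x).mk _ s :=
    (ae_ball_iff hD_count).2 fun x _ => (hmeas x).ae_eq_mk
  obtain ⟨T, hT_ae, hT, hT_good⟩ := (hu.and hD_mk).exists_measurable_mem
  set w : X → S → F := fun x => T.indicator fun s => u s x
  have w_cont (s : S) : Continuous fun x => w x s := by
    by_cases hs : s ∈ T
    · simpa only [w, indicator_of_mem hs] using (hT_good s hs).1
    · simpa only [w, indicator_of_notMem hs] using continuous_const
  have w_meas_of_mem {x : X} (hx : x ∈ D) : StronglyMeasurable (w x) := by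
    rw [show w x = T.indicator ((hmeas x).mk _) from
      indicator_congr fun s hs => (hT_good s hs).2 x hx]
    exact (hmeas x).stronglyMeasurable_mk.indicator hT
  have w_meas (x : X) : StronglyMeasurable (w x) := by
    obtain ⟨xs, hxs, hlim⟩ := mem_closure_iff_seq_limit.1 (hD_dense x)
    exact stronglyMeasurable_of_tendsto atTop (fun n => w_meas_of_mem (hxs n))
      (tendsto_pi_nhds.2 fun s => ((w_cont s).tendsto x).comp hlim)
  refine ⟨fun s x => w x s, (stronglyMeasurable_uncurry_of_continuous_of_stronglyMeasurable
    w_cont w_meas).comp_measurable measurable_swap, ?_⟩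
  filter_upwards [hT_ae] with s hs
  simp only [w, indicator_of_mem hs]

variable [TopologicalSpace.MetrizableSpace X] [SecondCountableTopology X] [MeasurableSpace X]
  [BorelSpace X] [NormedAddCommGroup F] [NormedSpace ℝ F] [SFinite μ] {ν : Measure X}
  [SigmaFinite ν]

lemma eLpNorm_integral_le {u : S → X → F} (hu : ∀ᵐ s ∂μ, Continuous (u s)) {q : ℝ≥0∞}
    (hq : 1 ≤ q) : eLpNorm (fun x => ∫ s, u s x ∂μ) q ν ≤ ∫⁻ s, eLpNorm (u s) q ν ∂μ := by
  -- Off `Z` the Bochner integral is `0` by convention, so only `Z` contributes to the left side.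
  set Z : Set X := {x | AEStronglyMeasurable (fun s => u s x) μ}
  have hZ : MeasurableSet Z := (isClosed_setOf_aestronglyMeasurable hu).measurableSet
  have hZ_emb : MeasurableEmbedding ((↑) : Z → X) := .subtype_coe hZ
  have eLpNorm_restrict (f : X → F) :
      eLpNorm (fun x : Z => f x) q (ν.comap (↑)) = eLpNorm f q (ν.restrict Z) := by
    rw [← map_comap_subtype_coe hZ, hZ_emb.eLpNorm_map_measure]
    rfl
  have : SigmaFinite (ν.comap ((↑) : Z → X)) :=
    .of_map _ hZ_emb.measurable.aemeasurable (by rw [hZ_emb.map_comap]; infer_instance)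
  obtain ⟨v, hv, huv⟩ := exists_stronglyMeasurable_uncurry_ae_eq (μ := μ)
    (u := fun s (x : Z) => u s x) (hu.mono fun s hs => hs.comp continuous_subtype_val)
    fun x => x.2
  have integral_eq_zero {x : X} (hx : x ∉ Z) : ∫ s, u s x ∂μ = 0 :=
    integral_non_aestronglyMeasurable hx
  calc eLpNorm (fun x => ∫ s, u s x ∂μ) q ν
      = eLpNorm (fun x : Z => ∫ s, u s x ∂μ) q (ν.comap (↑)) := by
        rw [eLpNorm_restrict fun x => ∫ s, u s x ∂μ, ← eLpNorm_indicator_eq_eLpNorm_restrict hZ]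
        congr 1
        exact (indicator_eq_self.2 fun x hx => by_contra fun h => hx (integral_eq_zero h)).symm
    _ ≤ eLpNorm (fun x : Z => ∫⁻ s, ‖v s x‖ₑ ∂μ) q (ν.comap (↑)) := by
        refine eLpNorm_mono_enorm fun x => ?_
        rw [integral_congr_ae (huv.mono fun s hs => congrFun hs x)]
        exact enorm_integral_le_lintegral_enorm _
    _ ≤ ∫⁻ s, eLpNorm (fun x : Z => ‖v s x‖ₑ) q (ν.comap (↑)) ∂μ :=
        eLpNorm_lintegral_le hv.enorm hq
    _ ≤ ∫⁻ s, eLpNorm (u s) q ν ∂μ := by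
        refine lintegral_mono_ae (huv.mono fun s hs => ?_)
        rw [eLpNorm_enorm, ← hs, eLpNorm_restrict]
        exact eLpNorm_mono_measure _ Measure.restrict_le_self

end MinkowskiBochner

/-- A sublinear operator on integrable functions that maps `L¹` to `L^∞` with norm at most `K` and
contracts the `L²` norm. -/
structure IsDispersive {X Y V W : Type*} [MeasurableSpace X] [MeasurableSpace Y]
    [NormedAddCommGroup V] [NormedAddCommGroup W] (μ : Measure X) (ν : Measure Y) (K : ℝ≥0∞)
    (T : (Y → V) → X → W) : Prop where
  stronglyMeasurable : ∀ f, Integrable f ν → StronglyMeasurable (T f)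
  enorm_add_le : ∀ f g, Integrable f ν → Integrable g ν → ∀ x,
    ‖T (f + g) x‖ₑ ≤ ‖T f x‖ₑ + ‖T g x‖ₑ
  enorm_le : ∀ f, Integrable f ν → ∀ x, ‖T f x‖ₑ ≤ K * ∫⁻ y, ‖f y‖ₑ ∂ν
  eLpNorm_two_le : ∀ f, Integrable f ν → eLpNorm (T f) 2 μ ≤ eLpNorm f 2 ν

section Marcinkiewicz

-- The Marcinkiewicz truncation: the set is where `|f|` is large, and an operator `L¹ → L^∞` of norm
-- `K` maps that part of `f` to a function bounded by `l`.
lemma mul_setLIntegral_enorm_le {Y V : Type*} [MeasurableSpace Y] [NormedAddCommGroup V]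
    {ν : Measure Y} {f : Y → V} (hf : StronglyMeasurable f) {r : ℝ} {K l : ℝ≥0∞}
    (hM0 : ∫⁻ y, ‖f y‖ₑ ^ r ∂ν ≠ 0) (hM : ∫⁻ y, ‖f y‖ₑ ^ r ∂ν ≠ ∞) :
    K * ∫⁻ y in {y | l < K * (∫⁻ y, ‖f y‖ₑ ^ r ∂ν) * ‖f y‖ₑ ^ (1 - r)}ᶜ, ‖f y‖ₑ ∂ν ≤ l := by
  set M := ∫⁻ y, ‖f y‖ₑ ^ r ∂ν
  have hA : MeasurableSet {y | l < K * M * ‖f y‖ₑ ^ (1 - r)}ᶜ :=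
    (measurableSet_lt measurable_const ((hf.enorm.pow_const _).const_mul _)).compl
  have mul_enorm_le (y : Y) (hy : K * M * ‖f y‖ₑ ^ (1 - r) ≤ l) :
      M * K * ‖f y‖ₑ ≤ l * ‖f y‖ₑ ^ r := by
    rcases eq_or_ne (f y) 0 with h0 | h0
    · simp [h0]
    calc M * K * ‖f y‖ₑ = K * M * ‖f y‖ₑ ^ (1 - r) * ‖f y‖ₑ ^ r := by
          rw [mul_assoc (K * M), ← ENNReal.rpow_add _ _ (enorm_ne_zero.2 h0) enorm_ne_top,
            sub_add_cancel, ENNReal.rpow_one, mul_comm M]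
      _ ≤ l * ‖f y‖ₑ ^ r := by gcongr
  refine (ENNReal.mul_le_mul_iff_right hM0 hM).1 ?_
  calc M * (K * ∫⁻ y in {y | l < K * M * ‖f y‖ₑ ^ (1 - r)}ᶜ, ‖f y‖ₑ ∂ν)
      = ∫⁻ y in {y | l < K * M * ‖f y‖ₑ ^ (1 - r)}ᶜ, M * K * ‖f y‖ₑ ∂ν := by
        rw [lintegral_const_mul _ hf.enorm, mul_assoc]
    _ ≤ ∫⁻ y in {y | l < K * M * ‖f y‖ₑ ^ (1 - r)}ᶜ, l * ‖f y‖ₑ ^ r ∂ν :=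
        setLIntegral_mono' hA fun y hy => mul_enorm_le y (not_lt.1 hy)
    _ ≤ ∫⁻ y, l * ‖f y‖ₑ ^ r ∂ν := setLIntegral_le_lintegral _ _
    _ = M * l := by rw [lintegral_const_mul _ (hf.enorm.pow_const r), mul_comm]

lemma rpow_two_mul_mul_rpow_eq {q r : ℝ} (hq : 2 < q) (hqr : q.HolderConjugate r) {a c : ℝ≥0∞}
    (ha : a ≠ ∞) : a ^ (2 : ℝ) * (c * a ^ (1 - r)) ^ (q - 2) = c ^ (q - 2) * a ^ r := by
  rcases eq_or_ne a 0 with rfl | h0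
  · simp [hqr.symm.pos]
  rw [ENNReal.mul_rpow_of_nonneg _ _ (sub_pos.2 hq).le, ← ENNReal.rpow_mul, mul_left_comm,
    ← ENNReal.rpow_add _ _ h0 ha]
  congr 2
  linear_combination -hqr.mul_eq_add

namespace IsDispersive

variable {X Y V W : Type*} [MeasurableSpace X] [MeasurableSpace Y] [NormedAddCommGroup V]
  [NormedAddCommGroup W] {μ : Measure X} {ν : Measure Y} {K : ℝ≥0∞} {T : (Y → V) → X → W}
  {f g : Y → V}

lemma enorm_le_of_ae_eq (hT : IsDispersive μ ν K T) (hf : Integrable f ν) (hfg : f =ᵐ[ν] g)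
    (x : X) : ‖T f x‖ₑ ≤ ‖T g x‖ₑ := by
  have hg : Integrable g ν := hf.congr hfg
  have lintegral_sub : ∫⁻ y, ‖(f - g) y‖ₑ ∂ν = 0 := by
    rw [lintegral_congr_ae (hfg.mono fun y hy => by
      rw [Pi.sub_apply, hy, sub_self, enorm_zero]), lintegral_zero]
  calc ‖T f x‖ₑ = ‖T (f - g + g) x‖ₑ := by rw [sub_add_cancel]
    _ ≤ ‖T (f - g) x‖ₑ + ‖T g x‖ₑ := hT.enorm_add_le _ _ (hf.sub hg) hg x
    _ ≤ K * ∫⁻ y, ‖(f - g) y‖ₑ ∂ν + ‖T g x‖ₑ := by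
        gcongr
        exact hT.enorm_le _ (hf.sub hg) x
    _ = ‖T g x‖ₑ := by rw [lintegral_sub, mul_zero, zero_add]

lemma rpow_two_mul_measure_lt_le (hT : IsDispersive μ ν K T) (hf : Integrable f ν) {A : Set Y}
    (hA : MeasurableSet A) {l : ℝ≥0∞} (hl : K * ∫⁻ y in Aᶜ, ‖f y‖ₑ ∂ν ≤ l) :
    l ^ (2 : ℝ) * μ {x | l < ‖T f x‖ₑ / 2} ≤ ∫⁻ y in A, ‖f y‖ₑ ^ (2 : ℝ) ∂ν := by
  have hfA : Integrable (A.indicator f) ν := hf.indicator hA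
  have hfAc : Integrable (Aᶜ.indicator f) ν := hf.indicator hA.compl
  have T_compl_le (x : X) : ‖T (Aᶜ.indicator f) x‖ₑ ≤ l := by
    refine (hT.enorm_le _ hfAc x).trans (le_of_eq_of_le ?_ hl)
    simp only [enorm_indicator_eq_indicator_enorm, lintegral_indicator hA.compl]
  have subset : {x | l < ‖T f x‖ₑ / 2} ⊆ {x | l ≤ ‖T (A.indicator f) x‖ₑ} := fun x hx => by
    by_contra hlt
    refine hx.not_ge (ENNReal.div_le_of_le_mul ?_)
    calc ‖T f x‖ₑ = ‖T (A.indicator f + Aᶜ.indicator f) x‖ₑ := by rw [indicator_self_add_compl]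
      _ ≤ ‖T (A.indicator f) x‖ₑ + ‖T (Aᶜ.indicator f) x‖ₑ := hT.enorm_add_le _ _ hfA hfAc x
      _ ≤ l + l := add_le_add (not_le.1 hlt).le (T_compl_le x)
      _ = l * 2 := (mul_two l).symm
  calc l ^ (2 : ℝ) * μ {x | l < ‖T f x‖ₑ / 2}
      ≤ l ^ (2 : ℝ) * μ {x | l ≤ ‖T (A.indicator f) x‖ₑ} := by gcongr
    _ ≤ eLpNorm (T (A.indicator f)) 2 μ ^ (2 : ℝ) :=
        mul_meas_ge_le_pow_eLpNorm' μ two_ne_zero ENNReal.ofNat_ne_top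
          (hT.stronglyMeasurable _ hfA).aestronglyMeasurable l
    _ ≤ eLpNorm (A.indicator f) 2 ν ^ (2 : ℝ) := by
        gcongr
        exact hT.eLpNorm_two_le _ hfA
    _ = ∫⁻ y in A, ‖f y‖ₑ ^ (2 : ℝ) ∂ν := by
        rw [eLpNorm_indicator_eq_eLpNorm_restrict hA, eLpNorm_eq_lintegral_rpow_enorm_toReal
          two_ne_zero ENNReal.ofNat_ne_top, ENNReal.toReal_ofNat, one_div,
          ENNReal.rpow_inv_rpow two_ne_zero]

lemma rpow_sub_one_mul_measure_lt_le (hT : IsDispersive μ ν K T) (hf : Integrable f ν) {A : Set Y}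
    (hA : MeasurableSet A) {q σ : ℝ} (hq : 2 < q) (hσ : 0 < σ)
    (hAσ : K * ∫⁻ y in Aᶜ, ‖f y‖ₑ ∂ν ≤ ENNReal.ofReal σ) :
    ENNReal.ofReal (q * σ ^ (q - 1)) * μ {x | ENNReal.ofReal σ < ‖T f x‖ₑ / 2} ≤
      ENNReal.ofReal (q / (q - 2)) * (ENNReal.ofReal ((q - 2) * σ ^ (q - 2 - 1)) *
        ∫⁻ y in A, ‖f y‖ₑ ^ (2 : ℝ) ∂ν) := by
  have hq2 : 0 < q - 2 := sub_pos.2 hq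
  have rpow_eq : q * σ ^ (q - 1) = q / (q - 2) * ((q - 2) * σ ^ (q - 2 - 1)) * σ ^ (2 : ℝ) := by
    rw [← mul_assoc, div_mul_cancel₀ _ hq2.ne', mul_assoc, ← Real.rpow_add hσ]
    ring_nf
  rw [rpow_eq, ENNReal.ofReal_mul (by positivity), ENNReal.ofReal_mul (by positivity),
    ← ENNReal.ofReal_rpow_of_pos hσ, mul_assoc, mul_assoc]
  gcongr
  exact hT.rpow_two_mul_measure_lt_le hf hA hAσ

lemma lintegral_enorm_rpow_le [SFinite μ] [SFinite ν] (hT : IsDispersive μ ν K T) {q r : ℝ}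
    (hq : 2 < q) (hqr : q.HolderConjugate r) (hf : Integrable f ν) (hfm : StronglyMeasurable f)
    (hM0 : ∫⁻ y, ‖f y‖ₑ ^ r ∂ν ≠ 0) (hM : ∫⁻ y, ‖f y‖ₑ ^ r ∂ν ≠ ∞) :
    ∫⁻ x, (‖T f x‖ₑ / 2) ^ q ∂μ ≤
      ENNReal.ofReal (q / (q - 2)) * K ^ (q - 2) * (∫⁻ y, ‖f y‖ₑ ^ r ∂ν) ^ (q - 1) := by
  have hq2 : 0 < q - 2 := sub_pos.2 hq
  have hTf : Measurable fun x => ‖T f x‖ₑ / 2 := (hT.stronglyMeasurable f hf).enorm.div_const 2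
  set M := ∫⁻ y, ‖f y‖ₑ ^ r ∂ν
  set L : Y → ℝ≥0∞ := fun y => K * M * ‖f y‖ₑ ^ (1 - r)
  have hL : Measurable L := (hfm.enorm.pow_const _).const_mul _
  calc ∫⁻ x, (‖T f x‖ₑ / 2) ^ q ∂μ
      = ∫⁻ x, 1 * (∫⁻ σ in posBelow (‖T f x‖ₑ / 2), ENNReal.ofReal (q * σ ^ (q - 1))) ∂μ := by
        simp only [lintegral_posBelow_mul_rpow_sub_one hqr.pos, one_mul]
    _ = ∫⁻ σ in Ioi 0, ENNReal.ofReal (q * σ ^ (q - 1)) *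
          μ {x | ENNReal.ofReal σ < ‖T f x‖ₑ / 2} := by
        rw [lintegral_mul_lintegral_posBelow aemeasurable_const hTf (by fun_prop)]
        simp only [setLIntegral_one]
    _ ≤ ∫⁻ σ in Ioi 0, ENNReal.ofReal (q / (q - 2)) *
          (ENNReal.ofReal ((q - 2) * σ ^ (q - 2 - 1)) *
            ∫⁻ y in {y | ENNReal.ofReal σ < L y}, ‖f y‖ₑ ^ (2 : ℝ) ∂ν) :=
        setLIntegral_mono' measurableSet_Ioi fun σ hσ =>
          hT.rpow_sub_one_mul_measure_lt_le hf (measurableSet_lt measurable_const hL) hq hσ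
            (mul_setLIntegral_enorm_le hfm hM0 hM)
    _ = ENNReal.ofReal (q / (q - 2)) * ∫⁻ y, (K * M) ^ (q - 2) * ‖f y‖ₑ ^ r ∂ν := by
        rw [lintegral_const_mul' _ _ ENNReal.ofReal_ne_top, ← lintegral_mul_lintegral_posBelow
          (hfm.enorm.pow_const _).aemeasurable hL (by fun_prop)]
        simp only [lintegral_posBelow_mul_rpow_sub_one hq2, L,
          rpow_two_mul_mul_rpow_eq hq hqr enorm_ne_top]
    _ = _ := by
        rw [lintegral_const_mul _ (hfm.enorm.pow_const r), ENNReal.mul_rpow_of_nonneg _ _ hq2.le,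
          mul_assoc, mul_assoc, show q - 1 = q - 2 + 1 by ring, ENNReal.rpow_add _ _ hM0 hM,
          ENNReal.rpow_one]

lemma eLpNorm_le_of_lintegral_ne [SFinite μ] [SFinite ν] (hT : IsDispersive μ ν K T)
    {q r : ℝ} (hq : 2 < q) (hqr : q.HolderConjugate r) (hf : Integrable f ν)
    (hfm : StronglyMeasurable f) (hM0 : ∫⁻ y, ‖f y‖ₑ ^ r ∂ν ≠ 0)
    (hM : ∫⁻ y, ‖f y‖ₑ ^ r ∂ν ≠ ∞) :
    eLpNorm (T f) (ENNReal.ofReal q) μ ≤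
      2 * ENNReal.ofReal (q / (q - 2)) ^ (1 / q) * K ^ (1 - 2 / q) *
        (∫⁻ y, ‖f y‖ₑ ^ r ∂ν) ^ (1 / r) := by
  have hq0 : 0 < q := hqr.pos
  have hr : (q - 1) * (1 / q) = 1 / r := by
    rw [one_div, one_div, ← hqr.one_sub_inv, sub_mul, mul_inv_cancel₀ hq0.ne', one_mul]
  have hθ : (q - 2) * (1 / q) = 1 - 2 / q := by field_simp
  rw [eLpNorm_eq_lintegral_rpow_enorm_toReal (ENNReal.ofReal_pos.2 hq0).ne' ENNReal.ofReal_ne_top,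
    ENNReal.toReal_ofReal hq0.le]
  calc (∫⁻ x, ‖T f x‖ₑ ^ q ∂μ) ^ (1 / q)
      = (2 ^ q * ∫⁻ x, (‖T f x‖ₑ / 2) ^ q ∂μ) ^ (1 / q) := by
        rw [← lintegral_const_mul' _ _ (by simp)]
        simp_rw [← ENNReal.mul_rpow_of_nonneg _ _ hq0.le,
          ENNReal.mul_div_cancel two_ne_zero ENNReal.ofNat_ne_top]
    _ ≤ (2 ^ q * (ENNReal.ofReal (q / (q - 2)) * K ^ (q - 2) *
          (∫⁻ y, ‖f y‖ₑ ^ r ∂ν) ^ (q - 1))) ^ (1 / q) := by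
        gcongr
        exact hT.lintegral_enorm_rpow_le hq hqr hf hfm hM0 hM
    _ = _ := by
        simp_rw [ENNReal.mul_rpow_of_nonneg _ _ (one_div_pos.2 hq0).le, ← ENNReal.rpow_mul, hr, hθ,
          mul_one_div_cancel hq0.ne', ENNReal.rpow_one, mul_assoc]

theorem eLpNorm_le [SFinite μ] [SFinite ν] (hT : IsDispersive μ ν K T) {q r : ℝ}
    (hq : 2 < q) (hqr : q.HolderConjugate r) (hf : Integrable f ν) :
    eLpNorm (T f) (ENNReal.ofReal q) μ ≤
      2 * ENNReal.ofReal (q / (q - 2)) ^ (1 / q) * K ^ (1 - 2 / q) *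
        eLpNorm f (ENNReal.ofReal r) ν := by
  have hr : 0 < r := hqr.symm.pos
  set g := hf.1.mk f
  have hfg : f =ᵐ[ν] g := hf.1.ae_eq_mk
  have hgm : StronglyMeasurable g := hf.1.stronglyMeasurable_mk
  have hg : Integrable g ν := hf.congr hfg
  rw [eLpNorm_congr_ae hfg, eLpNorm_eq_lintegral_rpow_enorm_toReal (ENNReal.ofReal_pos.2 hr).ne'
    ENNReal.ofReal_ne_top, ENNReal.toReal_ofReal hr.le]
  refine (eLpNorm_mono_enorm fun x => hT.enorm_le_of_ae_eq hf hfg x).trans ?_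
  rcases eq_or_ne (K * ∫⁻ y, ‖g y‖ₑ ∂ν) 0 with h0 | h0
  · have T_eq_zero : T g = 0 := funext fun x =>
      enorm_eq_zero.1 (le_zero_iff.1 ((hT.enorm_le g hg x).trans_eq h0))
    simp [T_eq_zero]
  obtain ⟨hK, hg0⟩ := mul_ne_zero_iff.1 h0
  have hM0 : ∫⁻ y, ‖g y‖ₑ ^ r ∂ν ≠ 0 := fun hM0 => hg0 <| by
    rw [lintegral_eq_zero_iff (hgm.enorm.pow_const r)] at hM0
    rw [lintegral_eq_zero_iff hgm.enorm]
    exact hM0.mono fun y hy => (ENNReal.rpow_eq_zero_iff_of_pos hr).1 hy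
  rcases eq_or_ne (∫⁻ y, ‖g y‖ₑ ^ r ∂ν) ∞ with hM | hM
  · have hθ : 0 < 1 - 2 / q := sub_pos.2 ((div_lt_one hqr.pos).2 hq)
    have hc : ENNReal.ofReal (q / (q - 2)) ^ (1 / q) ≠ 0 :=
      (ENNReal.rpow_pos (ENNReal.ofReal_pos.2 (div_pos hqr.pos (sub_pos.2 hq)))
        ENNReal.ofReal_ne_top).ne'
    have hKθ : K ^ (1 - 2 / q) ≠ 0 := by rwa [Ne, ENNReal.rpow_eq_zero_iff_of_pos hθ]
    rw [hM, ENNReal.top_rpow_of_pos (one_div_pos.2 hr),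
      ENNReal.mul_top (mul_ne_zero (mul_ne_zero two_ne_zero hc) hKθ)]
    exact le_top
  · exact hT.eLpNorm_le_of_lintegral_ne hq hqr hg hgm hM0 hM

end IsDispersive

end Marcinkiewicz

section Plancherel

open FourierTransform SchwartzMap

variable {E F : Type*} [NormedAddCommGroup E] [InnerProductSpace ℝ E] [FiniteDimensional ℝ E]
  [MeasurableSpace E] [BorelSpace E] [NormedAddCommGroup F] [InnerProductSpace ℂ F]
  {f : E → F}

lemma continuous_fourier_of_integrable (hf : Integrable f) : Continuous (𝓕 f) :=
  VectorFourier.fourierIntegral_continuous Real.continuous_fourierChar (innerSL ℝ).continuous₂ hf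

variable [CompleteSpace F]

lemma fourier_ae_eq_fourier_toLp (hf : Integrable f) (hf2 : MemLp f 2) :
    𝓕 f =ᵐ[volume] (𝓕 (hf2.toLp f) : Lp F 2 (volume : Measure E)) := by
  refine ae_eq_of_integral_contDiff_smul_eq
    (continuous_fourier_of_integrable hf).locallyIntegrable
    ((Lp.memLp _).locallyIntegrable (by norm_num)) fun φ hφ hφc => ?_
  let ψ : 𝓢(E, ℂ) := (hφc.comp_left (g := Complex.ofRealCLM) (map_zero _)).toSchwartzMap
    (Complex.ofRealCLM.contDiff.comp hφ)
  have integral_smul_fourier : ∫ x, 𝓕 ψ x • f x = ∫ x, ψ x • 𝓕 f x := by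
    have h := VectorFourier.integral_fourierIntegral_smul_eq_flip (L := innerₗ E)
      Real.continuous_fourierChar continuous_inner (ψ.integrable (μ := volume)) hf
    rwa [flip_innerₗ] at h
  calc ∫ x, φ x • 𝓕 f x = ∫ x, ψ x • 𝓕 f x := by
        simp [ψ]
    _ = ∫ x, 𝓕 ψ x • f x := integral_smul_fourier.symm
    _ = ∫ x, 𝓕 ψ x • hf2.toLp f x :=
        integral_congr_ae (hf2.coeFn_toLp.mono fun x hx => by simp only [hx])
    _ = Lp.toTemperedDistribution (𝓕 (hf2.toLp f) : Lp F 2 (volume : Measure E)) ψ := by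
        rw [← Lp.fourier_toTemperedDistribution_eq, TemperedDistribution.fourier_apply,
          Lp.toTemperedDistribution_apply]
    _ = ∫ x, φ x • (𝓕 (hf2.toLp f) : Lp F 2 (volume : Measure E)) x := by
        rw [Lp.toTemperedDistribution_apply]
        simp [ψ]

theorem eLpNorm_two_fourier (hf : Integrable f) (hf2 : MemLp f 2) :
    eLpNorm (𝓕 f) 2 volume = eLpNorm f 2 volume := by
  rw [eLpNorm_congr_ae (fourier_ae_eq_fourier_toLp hf hf2), ← Lp.enorm_def,
    ← eLpNorm_congr_ae hf2.coeFn_toLp, ← Lp.enorm_def, ← ofReal_norm, Lp.norm_fourier_eq,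
    ofReal_norm]

end Plancherel

section Propagator

open FourierTransform

/-- The oscillating factor `e^{i|z|²/(4t)}` of the Schrödinger kernel. -/
def schrodPhase {E : Type*} [NormedAddCommGroup E] (t : ℝ) (z : E) : ℂ :=
  Complex.exp (Complex.I * ((‖z‖ ^ 2 : ℝ) : ℂ) / (4 * (t : ℂ)))

/-- The modulus `(4π|t|)^{-d/2}` of the Schrödinger kernel, which is the `L¹ → L^∞` norm of the
propagator at time `t`. -/
def dispersiveConst (d : ℕ) (t : ℝ) : ℝ := (4 * π * |t|) ^ (-(d : ℝ) / 2)

lemma dispersiveConst_nonneg (d : ℕ) (t : ℝ) : 0 ≤ dispersiveConst d t := by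
  unfold dispersiveConst
  positivity

lemma norm_schrod_prefactor (d : ℕ) (t : ℝ) :
    ‖(4 * (π : ℂ) * Complex.I * (t : ℂ)) ^ (-(d : ℂ) / 2)‖ = dispersiveConst d t := by
  have cast_exponent : -(d : ℂ) / 2 = ((-(d : ℝ) / 2 : ℝ) : ℂ) := by push_cast; rfl
  rw [cast_exponent, Complex.norm_cpow_real, dispersiveConst]
  simp [abs_of_pos Real.pi_pos]

section Kernel

variable {E : Type*} [NormedAddCommGroup E]

lemma norm_schrodPhase (t : ℝ) (z : E) : ‖schrodPhase t z‖ = 1 := by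
  have phase_eq : Complex.I * ((‖z‖ ^ 2 : ℝ) : ℂ) / (4 * (t : ℂ)) =
      ((‖z‖ ^ 2 / (4 * t) : ℝ) : ℂ) * Complex.I := by
    push_cast; ring
  rw [schrodPhase, phase_eq, Complex.norm_exp_ofReal_mul_I]

lemma enorm_schrodPhase_mul (t : ℝ) (z : E) (w : ℂ) : ‖schrodPhase t z * w‖ₑ = ‖w‖ₑ := by
  rw [← ofReal_norm, norm_mul, norm_schrodPhase, one_mul, ofReal_norm]

@[fun_prop]
lemma continuous_schrodPhase (t : ℝ) : Continuous (schrodPhase t : E → ℂ) := by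
  unfold schrodPhase
  fun_prop

variable [MeasureSpace E] {d : ℕ} {t : ℝ} {f g : E → ℂ}

lemma schrod_of_ne_zero (d : ℕ) (ht : t ≠ 0) (f : E → ℂ) (x : E) :
    schrod d t f x = (4 * (π : ℂ) * Complex.I * (t : ℂ)) ^ (-(d : ℂ) / 2) *
      ∫ y, schrodPhase t (x - y) * f y := by
  simp only [schrod, if_neg ht, schrodPhase]

lemma enorm_schrod_le (ht : t ≠ 0) (f : E → ℂ) (x : E) :
    ‖schrod d t f x‖ₑ ≤ ENNReal.ofReal (dispersiveConst d t) * ∫⁻ y, ‖f y‖ₑ := by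
  rw [schrod_of_ne_zero d ht, enorm_mul, ← ofReal_norm (_ ^ _), norm_schrod_prefactor]
  gcongr
  refine (enorm_integral_le_lintegral_enorm _).trans_eq ?_
  simp only [enorm_schrodPhase_mul]

variable [BorelSpace E]

lemma integrable_schrodPhase_mul_iff (t : ℝ) (x : E) :
    Integrable (fun y => schrodPhase t (x - y) * f y) ↔ Integrable f := by
  have phase_ne_zero (y : E) : schrodPhase t (x - y) ≠ 0 := Complex.exp_ne_zero _
  refine ⟨fun h => ?_, fun h => h.bdd_mul
    (Continuous.aestronglyMeasurable (by fun_prop))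
    (ae_of_all _ fun y => (norm_schrodPhase t (x - y)).le)⟩
  have inv_mul_integrable : Integrable fun y =>
      (schrodPhase t (x - y))⁻¹ * (schrodPhase t (x - y) * f y) :=
    h.bdd_mul (c := 1) (Continuous.inv₀ (by fun_prop) phase_ne_zero).aestronglyMeasurable
      (ae_of_all _ fun y => by rw [norm_inv, norm_schrodPhase, inv_one])
  simpa only [inv_mul_cancel_left₀ (phase_ne_zero _)] using inv_mul_integrable

lemma schrod_eq_zero_of_not_integrable (ht : t ≠ 0) (hf : ¬Integrable f) : schrod d t f = 0 := by
  ext x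
  rw [schrod_of_ne_zero d ht, integral_undef (by rwa [integrable_schrodPhase_mul_iff]), mul_zero,
    Pi.zero_apply]

lemma schrod_add (ht : t ≠ 0) (hf : Integrable f) (hg : Integrable g) :
    schrod d t (f + g) = schrod d t f + schrod d t g := by
  ext x
  simp only [Pi.add_apply, schrod_of_ne_zero d ht, mul_add]
  rw [integral_add ((integrable_schrodPhase_mul_iff t x).2 hf)
    ((integrable_schrodPhase_mul_iff t x).2 hg), mul_add]

lemma continuous_schrod (ht : t ≠ 0) (f : E → ℂ) : Continuous (schrod d t f) := by
  by_cases hf : Integrable f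
  · rw [funext (schrod_of_ne_zero d ht f)]
    refine continuous_const.mul (continuous_of_dominated (bound := fun y => ‖f y‖)
      (fun x => ((integrable_schrodPhase_mul_iff t x).2 hf).aestronglyMeasurable)
      (fun x => ae_of_all _ fun y => ?_) hf.norm (ae_of_all _ fun y => by fun_prop))
    rw [norm_mul, norm_schrodPhase, one_mul]
  · rw [schrod_eq_zero_of_not_integrable ht hf]
    exact continuous_zero

end Kernel

variable {E : Type*} [NormedAddCommGroup E] [InnerProductSpace ℝ E] [FiniteDimensional ℝ E]
  [MeasurableSpace E] [BorelSpace E] {t : ℝ} {f : E → ℂ}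

lemma eLpNorm_comp_smul {G : Type*} [NormedAddCommGroup G] {g : E → G} (hg : Continuous g)
    {a : ℝ} (ha : a ≠ 0) {p : ℝ≥0∞} (hp : p ≠ ∞) :
    eLpNorm (fun x => g (a • x)) p volume =
      ENNReal.ofReal |(a ^ Module.finrank ℝ E)⁻¹| ^ (1 / p).toReal * eLpNorm g p volume := by
  have h := eLpNorm_map_measure (μ := volume) (p := p) (f := fun x : E => a • x)
    hg.aestronglyMeasurable (by fun_prop)
  rw [Measure.map_addHaar_smul _ ha, eLpNorm_smul_measure_of_ne_top hp, smul_eq_mul] at h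
  exact h.symm

lemma norm_schrod_eq_norm_fourier (d : ℕ) (ht : t ≠ 0) (f : E → ℂ) (x : E) :
    ‖schrod d t f x‖ = dispersiveConst d t *
      ‖𝓕 (fun y => schrodPhase t (0 - y) * f y) ((4 * π * t)⁻¹ • x)‖ := by
  -- Expand `‖x - y‖² = ‖x‖² - 2⟪x, y⟫ + ‖y‖²`: the cross term is the Fourier character.
  have phase_mul_eq (y : E) : schrodPhase t (x - y) * f y = schrodPhase t x *
      (Complex.exp (((-2 * π * inner ℝ y ((4 * π * t)⁻¹ • x) : ℝ) : ℂ) * Complex.I) •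
        (schrodPhase t (0 - y) * f y)) := by
    simp only [schrodPhase]
    rw [smul_eq_mul, ← mul_assoc, ← mul_assoc, ← Complex.exp_add, ← Complex.exp_add]
    congr 2
    rw [norm_sub_sq_real, zero_sub, norm_neg, inner_smul_right, real_inner_comm x y]
    have ht' : (t : ℂ) ≠ 0 := Complex.ofReal_ne_zero.2 ht
    have hπ : (π : ℂ) ≠ 0 := Complex.ofReal_ne_zero.2 Real.pi_ne_zero
    push_cast
    field_simp
    ring
  rw [schrod_of_ne_zero d ht, norm_mul, norm_schrod_prefactor, Real.fourier_eq']
  simp_rw [phase_mul_eq]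
  rw [integral_const_mul, norm_mul, norm_schrodPhase, one_mul]

lemma dispersiveConst_mul_rpow (d : ℕ) (ht : t ≠ 0) :
    ENNReal.ofReal (dispersiveConst d t) *
      ENNReal.ofReal |(((4 * π * t)⁻¹) ^ d)⁻¹| ^ (1 / 2 : ℝ≥0∞).toReal = 1 := by
  have hpos : 0 < 4 * π * |t| := by positivity
  have abs_eq : |(((4 * π * t)⁻¹) ^ d)⁻¹| = (4 * π * |t|) ^ (d : ℝ) := by
    rw [inv_pow, inv_inv, abs_pow, abs_mul, abs_of_pos (by positivity : 0 < 4 * π),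
      Real.rpow_natCast]
  rw [abs_eq, dispersiveConst, ENNReal.ofReal_rpow_of_pos (by positivity), ← Real.rpow_mul hpos.le,
    ← ENNReal.ofReal_mul (by positivity), ← Real.rpow_add hpos]
  simp [← div_eq_mul_inv, neg_div]

theorem eLpNorm_two_schrod (ht : t ≠ 0) (hf : Integrable f) (hf2 : MemLp f 2) :
    eLpNorm (schrod (Module.finrank ℝ E) t f) 2 volume = eLpNorm f 2 volume := by
  set h : E → ℂ := fun y => schrodPhase t (0 - y) * f y
  have enorm_h (y : E) : ‖h y‖ₑ = ‖f y‖ₑ := enorm_schrodPhase_mul t _ _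
  have eLpNorm_h : eLpNorm h 2 volume = eLpNorm f 2 volume :=
    eLpNorm_congr_enorm_ae (ae_of_all _ enorm_h)
  have hh : Integrable h := (integrable_schrodPhase_mul_iff t 0).2 hf
  have hh2 : MemLp h 2 := ⟨hh.1, eLpNorm_h.trans_lt hf2.2⟩
  have ha : (4 * π * t)⁻¹ ≠ 0 := by positivity
  calc eLpNorm (schrod (Module.finrank ℝ E) t f) 2 volume
      = eLpNorm (dispersiveConst (Module.finrank ℝ E) t •
          fun x => 𝓕 h ((4 * π * t)⁻¹ • x)) 2 volume :=
        eLpNorm_congr_norm_ae (ae_of_all _ fun x => by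
          rw [norm_schrod_eq_norm_fourier _ ht, Pi.smul_apply, norm_smul, Real.norm_of_nonneg
            (dispersiveConst_nonneg _ t)])
    _ = eLpNorm h 2 volume := by
        rw [eLpNorm_const_smul, eLpNorm_comp_smul (continuous_fourier_of_integrable hh) ha
          ENNReal.ofNat_ne_top, ← ofReal_norm, Real.norm_of_nonneg (dispersiveConst_nonneg _ t),
          ← mul_assoc, dispersiveConst_mul_rpow _ ht, one_mul, eLpNorm_two_fourier hh hh2]
    _ = eLpNorm f 2 volume := eLpNorm_h

theorem isDispersive_schrod (ht : t ≠ 0) :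
    IsDispersive (volume : Measure E) volume
      (ENNReal.ofReal (dispersiveConst (Module.finrank ℝ E) t))
      (schrod (Module.finrank ℝ E) t) where
  stronglyMeasurable f _ := (continuous_schrod ht f).stronglyMeasurable
  enorm_add_le f g hf hg x := by
    rw [schrod_add ht hf hg]
    exact enorm_add_le _ _
  enorm_le f _ x := enorm_schrod_le ht f x
  eLpNorm_two_le f hf := by
    rcases eq_or_ne (eLpNorm f 2 volume) ∞ with h | h
    · exact h ▸ le_top
    · exact (eLpNorm_two_schrod ht hf ⟨hf.1, h.lt_top⟩).le

end Propagator

section Strichartz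

variable {E : Type*} [NormedAddCommGroup E] [InnerProductSpace ℝ E] [FiniteDimensional ℝ E]
  [MeasurableSpace E] [BorelSpace E] {q q' : ℝ≥0∞}

lemma ofReal_dispersiveConst_rpow_le (d : ℕ) {t θ : ℝ} (ht : t ≠ 0) (hθ : 0 ≤ θ) :
    ENNReal.ofReal (dispersiveConst d t) ^ θ ≤ ENNReal.ofReal (|t| ^ (-(d / 2 * θ))) := by
  have hπ : |t| ≤ 4 * π * |t| :=
    le_mul_of_one_le_left (abs_nonneg t) (by linarith [Real.pi_gt_three])
  calc ENNReal.ofReal (dispersiveConst d t) ^ θ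
      ≤ ENNReal.ofReal (|t| ^ (-(d : ℝ) / 2)) ^ θ := by
        gcongr
        exact Real.rpow_le_rpow_of_nonpos (abs_pos.2 ht) hπ
          (div_nonpos_of_nonpos_of_nonneg (neg_nonpos.2 d.cast_nonneg) zero_le_two)
    _ = ENNReal.ofReal (|t| ^ (-(d / 2 * θ))) := by
        rw [ENNReal.ofReal_rpow_of_nonneg (by positivity) hθ, ← Real.rpow_mul (abs_nonneg t)]
        ring_nf

-- For `q = ∞` the division `2 / q.toReal` is `2 / 0 = 0`, which gives the right exponent.
theorem exists_eLpNorm_schrod_le (hq : 2 < q) (hqq' : q.HolderConjugate q') :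
    ∃ c : ℝ≥0∞, c ≠ ∞ ∧ ∀ t : ℝ, t ≠ 0 → ∀ f : E → ℂ,
      eLpNorm (schrod (Module.finrank ℝ E) t f) q volume ≤
        c * ENNReal.ofReal (|t| ^ (-(Module.finrank ℝ E / 2 * (1 - 2 / q.toReal)))) *
          eLpNorm f q' volume := by
  rcases eq_or_ne q ∞ with rfl | hq_top
  · obtain rfl : q' = 1 := by simpa using hqq'.inv_add_inv_eq_inv
    refine ⟨1, ENNReal.one_ne_top, fun t ht f => ?_⟩
    have enorm_le (x : E) := enorm_schrod_le (d := Module.finrank ℝ E) ht f x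
    have const_le := ofReal_dispersiveConst_rpow_le (Module.finrank ℝ E) ht zero_le_one
    rw [ENNReal.rpow_one] at const_le
    rw [eLpNorm_exponent_top, eLpNorm_one_eq_lintegral_enorm, ENNReal.toReal_top, div_zero,
      sub_zero, one_mul]
    exact (eLpNormEssSup_le_of_ae_enorm_bound (ae_of_all _ enorm_le)).trans (by gcongr)
  · have hQ : 2 < q.toReal := by
      simpa using (ENNReal.toReal_lt_toReal ENNReal.ofNat_ne_top hq_top).2 hq
    have hQQ' : q.toReal.HolderConjugate q'.toReal :=
      (ENNReal.HolderConjugate.toReal_iff (one_lt_two.trans hQ)).2 hqq'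
    have hq' : ENNReal.ofReal q'.toReal = q' :=
      ENNReal.ofReal_toReal fun h => hQQ'.symm.ne_zero (by rw [h, ENNReal.toReal_top])
    have hθ : 0 ≤ 1 - 2 / q.toReal := (sub_pos.2 ((div_lt_one hQQ'.pos).2 hQ)).le
    refine ⟨2 * ENNReal.ofReal (q.toReal / (q.toReal - 2)) ^ (1 / q.toReal), by finiteness,
      fun t ht f => ?_⟩
    by_cases hf : Integrable f
    · calc eLpNorm (schrod (Module.finrank ℝ E) t f) q volume
          = eLpNorm (schrod (Module.finrank ℝ E) t f) (ENNReal.ofReal q.toReal) volume := by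
            rw [ENNReal.ofReal_toReal hq_top]
        _ ≤ _ := (isDispersive_schrod ht).eLpNorm_le hQ hQQ' hf
        _ ≤ _ := by
            rw [hq']
            gcongr
            exact ofReal_dispersiveConst_rpow_le _ ht hθ
    · simp [schrod_eq_zero_of_not_integrable ht hf]

lemma eLpNorm_duhamel_le {d : ℕ} {k : ℝ → ℝ≥0∞} (hq : 1 ≤ q)
    (hk : ∀ t : ℝ, t ≠ 0 → ∀ f : E → ℂ,
      eLpNorm (schrod d t f) q volume ≤ k t * eLpNorm f q' volume) (F : ℝ → E → ℂ) (t : ℝ) :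
    eLpNorm (fun x => ∫ s in (0 : ℝ)..t, schrod d (t - s) (F s) x) q volume ≤
      ∫⁻ s, k (t - s) * eLpNorm (F s) q' volume := by
  have sub_ne_zero_ae : ∀ᵐ s ∂volume.restrict (uIoc 0 t), t - s ≠ 0 :=
    (ae_restrict_of_ae (Measure.ae_ne volume t)).mono fun s hs => sub_ne_zero.2 hs.symm
  calc eLpNorm (fun x => ∫ s in (0 : ℝ)..t, schrod d (t - s) (F s) x) q volume
      = eLpNorm (fun x => ∫ s in uIoc 0 t, schrod d (t - s) (F s) x) q volume :=
        eLpNorm_congr_norm_ae (ae_of_all _ fun x =>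
          intervalIntegral.norm_intervalIntegral_eq _ _ _ _)
    _ ≤ ∫⁻ s in uIoc 0 t, eLpNorm (schrod d (t - s) (F s)) q volume :=
        eLpNorm_integral_le (sub_ne_zero_ae.mono fun s hs => continuous_schrod hs (F s)) hq
    _ ≤ ∫⁻ s in uIoc 0 t, k (t - s) * eLpNorm (F s) q' volume :=
        lintegral_mono_ae (sub_ne_zero_ae.mono fun s hs => hk (t - s) hs (F s))
    _ ≤ ∫⁻ s, k (t - s) * eLpNorm (F s) q' volume := setLIntegral_le_lintegral _ _

lemma two_lt_of_admissible {a : ℝ≥0∞} {n : ℕ} (ha : a ≠ ∞)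
    (adm : 2 / a + (n : ℝ≥0∞) / q = (n : ℝ≥0∞) / 2) : 2 < q := by
  by_contra! hq
  have n_div_ne_top : (n : ℝ≥0∞) / 2 ≠ ∞ := ENNReal.div_ne_top (by simp) two_ne_zero
  have lt_add : (n : ℝ≥0∞) / 2 < n / 2 + 2 / a :=
    ENNReal.lt_add_right n_div_ne_top (ENNReal.div_pos two_ne_zero ha).ne'
  have add_le :=
    calc (n : ℝ≥0∞) / 2 + 2 / a
        ≤ n / q + 2 / a := by gcongr
      _ = n / 2 := by rw [add_comm, adm]
  exact lt_add.not_ge add_le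

lemma toReal_admissible {p : ℝ} {n : ℕ} (hp : 0 < p)
    (adm : 2 / ENNReal.ofReal p + (n : ℝ≥0∞) / q = (n : ℝ≥0∞) / 2) :
    (n : ℝ) / 2 * (1 - 2 / q.toReal) = 2 / p := by
  have hq0 : q ≠ 0 := (zero_le_two.trans_lt (two_lt_of_admissible ENNReal.ofReal_ne_top adm)).ne'
  have h := congrArg ENNReal.toReal adm
  rw [ENNReal.toReal_add (ENNReal.div_ne_top ENNReal.ofNat_ne_top (ENNReal.ofReal_pos.2 hp).ne')
    (ENNReal.div_ne_top (ENNReal.natCast_ne_top n) hq0)] at h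
  simp only [ENNReal.toReal_div, ENNReal.toReal_ofNat, ENNReal.toReal_natCast,
    ENNReal.toReal_ofReal hp.le] at h
  linear_combination -h

theorem lorentz_strichartz_inhomogeneous_general {p p' : ℝ} {r : ℝ≥0∞} (hp : 2 < p)
    (hp' : 1 / p + 1 / p' = 1) (hq' : 1 / q + 1 / q' = 1)
    (adm : 2 / ENNReal.ofReal p + (Module.finrank ℝ E : ℝ≥0∞) / q =
      (Module.finrank ℝ E : ℝ≥0∞) / 2) (hr1 : 1 ≤ r) (hr : r ≠ ∞) :
    ∃ C : ℝ, 0 < C ∧ ∀ F : ℝ → E → ℂ,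
      lorentzNorm (volume : Measure ℝ) (ENNReal.ofReal p) r
          (fun t => eLpNorm (fun x => ∫ s in (0 : ℝ)..t,
            schrod (Module.finrank ℝ E) (t - s) (F s) x) q volume) ≤
        ENNReal.ofReal C * lorentzNorm (volume : Measure ℝ) (ENNReal.ofReal p') r
          (fun t => eLpNorm (F t) q' volume) := by
  have hpp' : p.HolderConjugate p' :=
    Real.holderConjugate_iff.2 ⟨one_lt_two.trans hp, by simpa only [one_div] using hp'⟩
  have hqq' : q.HolderConjugate q' := ⟨by simpa only [one_div, inv_one] using hq'⟩
  have hq : 2 < q := two_lt_of_admissible ENNReal.ofReal_ne_top adm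
  have hα0 : 0 ≤ 2 / p := div_nonneg zero_le_two hpp'.nonneg
  have hα1 : 2 / p < 1 := (div_lt_one hpp'.pos).2 hp
  have hα : p⁻¹ = p'⁻¹ + 2 / p - 1 := by linear_combination -hpp'.inv_add_inv_eq_one
  obtain ⟨c, hc, dispersive⟩ := exists_eLpNorm_schrod_le (E := E) hq hqq'
  rw [toReal_admissible hpp'.pos adm] at dispersive
  have hK := (isWeakKernel_abs_sub_rpow_neg hα0 hα1).const_mul c
  set C := c * ENNReal.ofReal (1 + 2 / (1 - 2 / p)) *
    ∫⁻ z, ENNReal.ofReal (Real.exp (-min p⁻¹ (1 - p'⁻¹) * |z|))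
  have hC : C ≠ ∞ := ENNReal.mul_ne_top (by finiteness) <| lintegral_exp_neg_mul_abs_ne_top <|
    lt_min hpp'.inv_pos (sub_pos.2 (inv_lt_one_of_one_lt₀ hpp'.symm.lt))
  refine ⟨C.toReal + 1, by positivity, fun F => ?_⟩
  calc _ ≤ lorentzNorm volume (ENNReal.ofReal p) r fun t =>
        ∫⁻ s, c * ENNReal.ofReal (|t - s| ^ (-(2 / p))) * eLpNorm (F s) q' volume :=
        lorentzNorm_mono _ _ <| eLpNorm_duhamel_le (one_le_two.trans hq.le) dispersive F
    _ ≤ C * lorentzNorm volume (ENNReal.ofReal p') r fun t => eLpNorm (F t) q' volume :=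
        hK.lorentzNorm_lintegral_le hpp'.symm.pos hpp'.pos hα hα0 hα1 hr1 hr _
    _ ≤ _ := by
        gcongr
        exact (ENNReal.le_ofReal_iff_toReal_le hC (by positivity)).2
          (le_add_of_nonneg_right zero_le_one)

end Strichartz

/-- **Inhomogeneous (retarded) Lorentz–Strichartz estimate.**  Fix `d ≥ 1` and a
Schrödinger-admissible pair `(p, q)` with `2 < p < ∞`, `2 ≤ q ≤ ∞`, `2/p + d/q = d/2`.
With `p'`, `q'` the conjugate exponents, for every spacetime `F` with finite
`L^{p',2}_t L^{q'}_x(ℝ×ℝ^d)` norm,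
`‖∫_0^t e^{i(t-s)Δ} F(s) ds‖_{L^{p,2}_t L^q_x(ℝ×ℝ^d)} ≤ C ‖F‖_{L^{p',2}_t L^{q'}_x(ℝ×ℝ^d)}`
with `C = C(d, p, q)`. -/
theorem lorentz_strichartz_inhomogeneous (d : ℕ) (hd : 1 ≤ d) (p p' : ℝ) (q q' : ℝ≥0∞)
    (hp : 2 < p) (hp' : 1 / p + 1 / p' = 1) (hq : 2 ≤ q) (hq' : 1 / q + 1 / q' = 1)
    (adm : 2 / ENNReal.ofReal p + (d : ℝ≥0∞) / q = (d : ℝ≥0∞) / 2) :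
    ∃ C : ℝ, 0 < C ∧
      ∀ F : ℝ → EuclideanSpace ℝ (Fin d) → ℂ,
        lorentzNorm (volume : Measure ℝ) (ENNReal.ofReal p') 2
            (fun t => eLpNorm (F t) q' volume) ≠ ∞ →
        lorentzNorm (volume : Measure ℝ) (ENNReal.ofReal p) 2
            (fun t => eLpNorm (fun x => ∫ s in (0:ℝ)..t, schrod d (t - s) (F s) x) q volume) ≤
          ENNReal.ofReal C *
            lorentzNorm (volume : Measure ℝ) (ENNReal.ofReal p') 2
              (fun t => eLpNorm (F t) q' volume) := by
  obtain ⟨C, hC, bound⟩ := lorentz_strichartz_inhomogeneous_general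
    (E := EuclideanSpace ℝ (Fin d)) hp hp' hq' (by rwa [finrank_euclideanSpace_fin])
    one_le_two ENNReal.ofNat_ne_top
  rw [finrank_euclideanSpace_fin] at bound
  exact ⟨C, hC, fun F _ => bound F⟩
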